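/- Suppose a PbP optimal K-tuple γ^{(K),o} exists. Then for each station k, the minimization in the dynamic programming equations of Theorem 3(1.1) is achieved within the class of semi-separated strategies 𝒰^{k,s-sep} ⊆ 𝒰^k: the optimal actions have the form u_n^{k,o} = γ_n^{k,o}(Ξ_n^k[i_n^k], δ_n^{(K)}) at the terminal time and u_t^{k,o} = γ_t^{k,o}(Ξ_t^k[i_t^k], δ_t^{(K)}, λ_t^k) for t ∈ {1,…,n−1}; i.e., the triple (Ξ_t^k[I_t^k], Δ_t^{(K)}, Λ_t^k) is a sufficient statistic for the PbP optimal strategy of station k. -/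

import Mathlib

/-!
Decentralized stochastic network with `T`-step delayed sharing information patterns
(canonical finite-path-space formalization).

Times are 0-based: the paper's horizon `{1,…,n}` is encoded as `{0,…,n}` here
(so the paper's terminal time `n` is `n`, and paper time `t` corresponds to index `t-1`).

The sample space is the (finite) space of state/observation trajectories; given a
strategy profile the actions are determined recursively, and the probability of a
trajectory is the product of the Markovian kernels.  All posteriors (the private
posterior `Ξ` and the centralized posteriors `Π`, `Θ`) are elementary conditional
probabilities on this finite space.
-/

open Finset
open scoped BigOperators Classical

namespace DelayedSharing

/-- Canonical sample space: trajectories of states and observations over times `0,…,n`. -/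
abbrev Traj (n : ℕ) (X : Type) {K : ℕ} (Y : Fin K → Type) : Type :=
  (Fin (n + 1) → X) × (Fin (n + 1) → ∀ k, Y k)

/-- Clamped index into the horizon `{0,…,n}`. -/
def idx (n t : ℕ) : Fin (n + 1) := ⟨min t n, Nat.lt_succ_of_le (Nat.min_le_right t n)⟩

/-- A strategy profile: station `k`'s map, at each time, from full observation/action
histories to an action in the action space `U k`.  Admissibility (below) restricts the
dependence to the `T`-step delayed sharing information pattern `I_t^k`. -/
abbrev Strat {K : ℕ} (Y U : Fin K → Type) : Type :=
  ∀ k : Fin K, ℕ → (ℕ → ∀ j, Y j) → (ℕ → ∀ j, U j) → U k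

/-- A strategy of the single station `k`. -/
abbrev SStrat {K : ℕ} (Y U : Fin K → Type) (k : Fin K) : Type :=
  ℕ → (ℕ → ∀ j, Y j) → (ℕ → ∀ j, U j) → U k

variable {X : Type} {K : ℕ} {Y U : Fin K → Type}

def stateAt {n : ℕ} (ω : Traj n X Y) (t : ℕ) : X := ω.1 (idx n t)

def obsAt {n : ℕ} (ω : Traj n X Y) (t : ℕ) (k : Fin K) : Y k := ω.2 (idx n t) k

/-- `γ` is admissible for the `T`-step delayed sharing pattern: `γ k t` depends only on
`I_t^k = {Δ_t^{(K)}, Λ_t^k}`, i.e. on all stations' observations/actions up to time `t-T`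
(0-based: times `s` with `s + T ≤ t`), own observations up to `t` and own actions up to
`t-1`. -/
def Admissible (T : ℕ) (γ : Strat Y U) : Prop :=
  ∀ (k : Fin K) (t : ℕ) (y y' : ℕ → ∀ j, Y j) (u u' : ℕ → ∀ j, U j),
    (∀ s j, s + T ≤ t → y s j = y' s j) →
    (∀ s j, s + T ≤ t → u s j = u' s j) →
    (∀ s, s ≤ t → y s k = y' s k) →
    (∀ s, s < t → u s k = u' s k) →
    γ k t y u = γ k t y' u'

/-- Admissibility of a single station's strategy. -/
def SAdmissible (T : ℕ) (k : Fin K) (g : SStrat Y U k) : Prop :=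
  ∀ (t : ℕ) (y y' : ℕ → ∀ j, Y j) (u u' : ℕ → ∀ j, U j),
    (∀ s j, s + T ≤ t → y s j = y' s j) →
    (∀ s j, s + T ≤ t → u s j = u' s j) →
    (∀ s, s ≤ t → y s k = y' s k) →
    (∀ s, s < t → u s k = u' s k) →
    g t y u = g t y' u'

/-- Replace station `k`'s strategy in the profile `γ` by `g`. -/
def updStrat (γ : Strat Y U) (k : Fin K) (g : SStrat Y U k) : Strat Y U :=
  fun j => if h : j = k then (by subst h; exact g) else γ j

/-- Station `k` uses `g₁` before time `t` and `g₂` from time `t` on. -/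
def splice {k : Fin K} (g₁ g₂ : SStrat Y U k) (t : ℕ) : SStrat Y U k :=
  fun τ => if τ < t then g₁ τ else g₂ τ

variable [∀ k, Nonempty (U k)]

/-- The actions at times `< t` generated recursively by the strategy profile `γ` from the
observation path `y`. -/
noncomputable def actUpto (γ : Strat Y U) (y : ℕ → ∀ j, Y j) : ℕ → ℕ → ∀ j, U j
  | 0 => fun _ j => Classical.arbitrary (U j)
  | t + 1 => fun s => if s = t then (fun j => γ j t y (actUpto γ y t)) else actUpto γ y t s

/-- The action profile at time `t` generated by `γ` from the observation path `y`. -/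
noncomputable def act (γ : Strat Y U) (y : ℕ → ∀ j, Y j) (t : ℕ) : ∀ j, U j :=
  fun j => γ j t y (actUpto γ y t)

/-- The realized action profile along a trajectory. -/
noncomputable def actAt {n : ℕ} (γ : Strat Y U) (ω : Traj n X Y) (t : ℕ) : ∀ j, U j :=
  act γ (fun s => ω.2 (idx n s)) t

/-- The Markovian kernels and the per-stage cost of the decentralized network (0-based):
`prior` is the PMF of the initial state; `obs0 k` the PMF of station `k`'s initial
observation given the initial state; `trans t` the transition PMF from time `t` to `t+1`
given the action profile at time `t`; `obs t k` the PMF of station `k`'s observation at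
time `t+1` given the state at `t+1` and the action profile at time `t` (the observations
of the stations being conditionally independent given these); `cost t` the per-stage
cost `ℓ(t,·,·)`. -/
structure Kernels (X : Type) {K : ℕ} (Y U : Fin K → Type) where
  prior : X → ℝ
  obs0 : ∀ k : Fin K, X → Y k → ℝ
  trans : ℕ → X → (∀ j, U j) → X → ℝ
  obs : ℕ → ∀ k : Fin K, X → (∀ j, U j) → Y k → ℝ
  cost : ℕ → X → (∀ j, U j) → ℝ

variable [Fintype X] [∀ k, Fintype (Y k)]

/-- All the kernels are genuine probability mass functions. -/
def Kernels.IsPMF (M : Kernels X Y U) : Prop :=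
  (∀ x, 0 ≤ M.prior x) ∧ (∑ x, M.prior x) = 1 ∧
  (∀ (k : Fin K) x, (∀ y, 0 ≤ M.obs0 k x y) ∧ (∑ y, M.obs0 k x y) = 1) ∧
  (∀ t x u, (∀ x', 0 ≤ M.trans t x u x') ∧ (∑ x', M.trans t x u x') = 1) ∧
  (∀ t (k : Fin K) x u, (∀ y, 0 ≤ M.obs t k x u y) ∧ (∑ y, M.obs t k x u y) = 1)

/-- The probability of a trajectory under the strategy profile `γ`: the product of the
Markovian kernels along the path, the actions being generated by `γ`. -/
noncomputable def prob (n : ℕ) (M : Kernels X Y U) (γ : Strat Y U) (ω : Traj n X Y) : ℝ :=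
  M.prior (stateAt ω 0) * (∏ k, M.obs0 k (stateAt ω 0) (obsAt ω 0 k)) *
    ∏ t ∈ Finset.range n,
      (M.trans t (stateAt ω t) (actAt γ ω t) (stateAt ω (t + 1)) *
        ∏ k, M.obs t k (stateAt ω (t + 1)) (actAt γ ω t) (obsAt ω (t + 1) k))

/-- `ℙ^γ(A)` on the canonical finite path space. -/
noncomputable def Pr (n : ℕ) (M : Kernels X Y U) (γ : Strat Y U) (A : Traj n X Y → Prop) : ℝ :=
  ∑ ω : Traj n X Y, if A ω then prob n M γ ω else 0

/-- Conditional probability `ℙ^γ(A | B)`. -/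
noncomputable def condPr (n : ℕ) (M : Kernels X Y U) (γ : Strat Y U)
    (A B : Traj n X Y → Prop) : ℝ :=
  Pr n M γ (fun ω => A ω ∧ B ω) / Pr n M γ B

/-- The expected total cost `J_n(γ) = 𝔼^γ [Σ_t ℓ(t, X_t, U_t^{(K)})]`. -/
noncomputable def J (n : ℕ) (M : Kernels X Y U) (γ : Strat Y U) : ℝ :=
  ∑ ω : Traj n X Y, prob n M γ ω *
    ∑ t ∈ Finset.range (n + 1), M.cost t (stateAt ω t) (actAt γ ω t)

/-- The conditional cost-to-go from time `t` given the event `B`: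
`𝔼^γ [Σ_{τ=t}^n ℓ(τ, X_τ, U_τ^{(K)}) | B]`. -/
noncomputable def Jcond (n : ℕ) (M : Kernels X Y U) (γ : Strat Y U) (t : ℕ)
    (B : Traj n X Y → Prop) : ℝ :=
  (∑ ω : Traj n X Y,
      if B ω then prob n M γ ω * ∑ τ ∈ Finset.Icc t n, M.cost τ (stateAt ω τ) (actAt γ ω τ)
      else 0) / Pr n M γ B

/-- Person-by-person optimality of the profile `γo`. -/
noncomputable def PbPOptimal (n T : ℕ) (M : Kernels X Y U) (γo : Strat Y U) : Prop :=
  Admissible T γo ∧ ∀ (k : Fin K) (g : SStrat Y U k),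
    Admissible T (updStrat γo k g) → J n M γo ≤ J n M (updStrat γo k g)

/-- Person-by-person optimality of `γo` within the class `P` of strategy profiles. -/
noncomputable def PbPOptimalIn (n T : ℕ) (M : Kernels X Y U) (P : Strat Y U → Prop)
    (γo : Strat Y U) : Prop :=
  Admissible T γo ∧ P γo ∧ ∀ (k : Fin K) (g : SStrat Y U k),
    Admissible T (updStrat γo k g) → P (updStrat γo k g) →
      J n M γo ≤ J n M (updStrat γo k g)

/-! ### Information events: realizations of `I_t^k`, `Δ_t^{(K)}`, `Λ_t^k` -/

/-- The event `{I_t^k = i_t^k}`, where the realization `i_t^k = {δ_t^{(K)}, λ_t^k}` is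
recorded by total functions `iy, iu` (only the coordinates of the information pattern
matter). -/
def InfoEq {n : ℕ} (T : ℕ) (γ : Strat Y U) (k : Fin K) (t : ℕ)
    (iy : ℕ → ∀ j, Y j) (iu : ℕ → ∀ j, U j) (ω : Traj n X Y) : Prop :=
  (∀ s j, s + T ≤ t → obsAt ω s j = iy s j) ∧
  (∀ s j, s + T ≤ t → actAt γ ω s j = iu s j) ∧
  (∀ s, s ≤ t → obsAt ω s k = iy s k) ∧
  (∀ s, s < t → actAt γ ω s k = iu s k)

/-- The event `{Δ_t^{(K)} = δ_t^{(K)}}` (common/shared data). -/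
def CommonEq {n : ℕ} (T : ℕ) (γ : Strat Y U) (t : ℕ)
    (δy : ℕ → ∀ j, Y j) (δu : ℕ → ∀ j, U j) (ω : Traj n X Y) : Prop :=
  (∀ s j, s + T ≤ t → obsAt ω s j = δy s j) ∧
  (∀ s j, s + T ≤ t → actAt γ ω s j = δu s j)

/-- The event `{Λ_t^{-k} = λ_t^{-k}}` (private data of the other stations). -/
def PrivOthersEq {n : ℕ} (T : ℕ) (γ : Strat Y U) (k : Fin K) (t : ℕ)
    (ly : ℕ → ∀ j, Y j) (lu : ℕ → ∀ j, U j) (ω : Traj n X Y) : Prop :=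
  (∀ s j, j ≠ k → s ≤ t → t < s + T → obsAt ω s j = ly s j) ∧
  (∀ s j, j ≠ k → s < t → t < s + T → actAt γ ω s j = lu s j)

/-- The event `{Λ_t^{(K)} = λ_t^{(K)}}` (private data of all stations). -/
def PrivAllEq {n : ℕ} (T : ℕ) (γ : Strat Y U) (t : ℕ)
    (ly : ℕ → ∀ j, Y j) (lu : ℕ → ∀ j, U j) (ω : Traj n X Y) : Prop :=
  (∀ s j, s ≤ t → t < s + T → obsAt ω s j = ly s j) ∧
  (∀ s j, s < t → t < s + T → actAt γ ω s j = lu s j)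

/-- Agreement of two trajectories on the common data `Δ_t^{(K)}`. -/
def CommonAgree {n : ℕ} (T : ℕ) (γ : Strat Y U) (t : ℕ) (ω ω' : Traj n X Y) : Prop :=
  (∀ s (j : Fin K), s + T ≤ t → obsAt ω s j = obsAt ω' s j) ∧
  (∀ s (j : Fin K), s + T ≤ t → actAt γ ω s j = actAt γ ω' s j)

/-- Agreement of two trajectories on station `k`'s private data `Λ_t^k`. -/
def PrivAgree {n : ℕ} (T : ℕ) (γ : Strat Y U) (k : Fin K) (t : ℕ) (ω ω' : Traj n X Y) : Prop :=
  (∀ s, s ≤ t → t < s + T → obsAt ω s k = obsAt ω' s k) ∧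
  (∀ s, s < t → t < s + T → actAt γ ω s k = actAt γ ω' s k)

/-- Agreement of two trajectories on station `k`'s information `I_t^k`. -/
def InfoAgree {n : ℕ} (T : ℕ) (γ : Strat Y U) (k : Fin K) (t : ℕ) (ω ω' : Traj n X Y) : Prop :=
  CommonAgree T γ t ω ω' ∧
  (∀ s, s ≤ t → obsAt ω s k = obsAt ω' s k) ∧
  (∀ s, s < t → actAt γ ω s k = actAt γ ω' s k)

/-! ### Posteriors -/

/-- The private posterior `Ξ_t^k[i_t^k](x, λ_t^{-k})
 = ℙ^γ(X_t = x, Λ_t^{-k} = λ_t^{-k} | I_t^k = i_t^k)`. -/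
noncomputable def Xi (n T : ℕ) (M : Kernels X Y U) (γ : Strat Y U) (k : Fin K) (t : ℕ)
    (iy : ℕ → ∀ j, Y j) (iu : ℕ → ∀ j, U j) (x : X)
    (ly : ℕ → ∀ j, Y j) (lu : ℕ → ∀ j, U j) : ℝ :=
  condPr n M γ (fun ω => stateAt ω t = x ∧ PrivOthersEq T γ k t ly lu ω)
    (InfoEq T γ k t iy iu)

/-- The centralized posterior `Π_t^{(K)}[δ_t^{(K)}](x) = ℙ^γ(X_{t-T} = x | Δ_t^{(K)} = δ)`. -/
noncomputable def PiPost (n T : ℕ) (M : Kernels X Y U) (γ : Strat Y U) (t : ℕ)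
    (δy : ℕ → ∀ j, Y j) (δu : ℕ → ∀ j, U j) (x : X) : ℝ :=
  condPr n M γ (fun ω => stateAt ω (t - T) = x) (CommonEq T γ t δy δu)

/-- The centralized posterior
`Θ_t^{γ}[δ_t^{(K)}](x, λ_t^{(K)}) = ℙ^γ(X_t = x, Λ_t^{(K)} = λ | Δ_t^{(K)} = δ)`. -/
noncomputable def ThetaPost (n T : ℕ) (M : Kernels X Y U) (γ : Strat Y U) (t : ℕ)
    (δy : ℕ → ∀ j, Y j) (δu : ℕ → ∀ j, U j) (x : X)
    (ly : ℕ → ∀ j, Y j) (lu : ℕ → ∀ j, U j) : ℝ :=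
  condPr n M γ (fun ω => stateAt ω t = x ∧ PrivAllEq T γ t ly lu ω) (CommonEq T γ t δy δu)

/-- The realization `I_t^k = i_t^k` has positive probability under `γ`. -/
noncomputable def PosInfo (n T : ℕ) (M : Kernels X Y U) (γ : Strat Y U) (k : Fin K) (t : ℕ)
    (iy : ℕ → ∀ j, Y j) (iu : ℕ → ∀ j, U j) : Prop :=
  0 < Pr n M γ (InfoEq T γ k t iy iu)

/-- The random private posterior `Ξ_t^k[I_t^k]` evaluated along the trajectory `ω`. -/
noncomputable def XiAt (n T : ℕ) (M : Kernels X Y U) (γ : Strat Y U) (k : Fin K) (t : ℕ)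
    (ω : Traj n X Y) : X → (ℕ → ∀ j, Y j) → (ℕ → ∀ j, U j) → ℝ :=
  fun x ly lu => Xi n T M γ k t (fun s => ω.2 (idx n s)) (actAt γ ω) x ly lu

/-! ### Finite parametrization of private realizations -/

variable [∀ k, DecidableEq (Y k)] [∀ k, DecidableEq (U k)] [∀ k, Fintype (U k)]
variable [∀ k, Nonempty (Y k)]

/-- Canonical (finite) set of realizations of `Λ_t^{-k}`: pairs of functions supported on
the private windows of the stations `j ≠ k` (observations at times `s ≤ t` with
`t < s + T`; actions at times `s < t` with `t < s + T`) and equal to a fixed default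
outside. -/
noncomputable def privSet (n T : ℕ) (k : Fin K) (t : ℕ) :
    Finset ((Fin (n + 1) → ∀ j, Y j) × (Fin (n + 1) → ∀ j, U j)) :=
  Finset.univ.filter (fun p =>
    (∀ (s : Fin (n + 1)) (j : Fin K), ¬(j ≠ k ∧ s.1 ≤ t ∧ t < s.1 + T) →
        p.1 s j = Classical.arbitrary (Y j)) ∧
    (∀ (s : Fin (n + 1)) (j : Fin K), ¬(j ≠ k ∧ s.1 < t ∧ t < s.1 + T) →
        p.2 s j = Classical.arbitrary (U j)))

/-- Canonical (finite) set of realizations of `Λ_t^{(K)}` (all stations). -/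
noncomputable def privAllSet (n T t : ℕ) :
    Finset ((Fin (n + 1) → ∀ j, Y j) × (Fin (n + 1) → ∀ j, U j)) :=
  Finset.univ.filter (fun p =>
    (∀ (s : Fin (n + 1)) (j : Fin K), ¬(s.1 ≤ t ∧ t < s.1 + T) →
        p.1 s j = Classical.arbitrary (Y j)) ∧
    (∀ (s : Fin (n + 1)) (j : Fin K), ¬(s.1 < t ∧ t < s.1 + T) →
        p.2 s j = Classical.arbitrary (U j)))

/-- View the observation part of a private realization as a (ℕ-indexed) realization
function. -/
def pWinY {n : ℕ} (p : (Fin (n + 1) → ∀ j, Y j) × (Fin (n + 1) → ∀ j, U j)) :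
    ℕ → ∀ j, Y j := fun s => p.1 (idx n s)

/-- View the action part of a private realization as a realization function. -/
def pWinU {n : ℕ} (p : (Fin (n + 1) → ∀ j, Y j) × (Fin (n + 1) → ∀ j, U j)) :
    ℕ → ∀ j, U j := fun s => p.2 (idx n s)

/-- The observation history obtained by combining the realized information `iy` of
station `k` (own and common coordinates) with the private window `py` of the other
stations. -/
def mixObs {n : ℕ} (T t : ℕ) (k : Fin K) (iy : ℕ → ∀ j, Y j)
    (py : Fin (n + 1) → ∀ j, Y j) : ℕ → ∀ j, Y j :=
  fun s j => if j = k ∨ s + T ≤ t then iy s j else py (idx n s) j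

/-- The action history obtained by combining the realized information `iu` of station `k`
with the private window `pu` of the other stations. -/
def mixAct {n : ℕ} (T t : ℕ) (k : Fin K) (iu : ℕ → ∀ j, U j)
    (pu : Fin (n + 1) → ∀ j, U j) : ℕ → ∀ j, U j :=
  fun s j => if j = k ∨ s + T ≤ t then iu s j else pu (idx n s) j

/-- The action profile at time `t`: station `k` applies `u`, while each other station `j`
applies `γ_t^j(δ_t^{(K)}, λ_t^j)`, its strategy evaluated at the common data recorded in
`(iy, iu)` and its private data recorded in the window `p`. -/
noncomputable def prof {n : ℕ} (T t : ℕ) (γ : Strat Y U) (k : Fin K)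
    (iy : ℕ → ∀ j, Y j) (iu : ℕ → ∀ j, U j)
    (p : (Fin (n + 1) → ∀ j, Y j) × (Fin (n + 1) → ∀ j, U j)) (u : U k) : ∀ j, U j :=
  Function.update (fun j => γ j t (mixObs T t k iy p.1) (mixAct T t k iu p.2)) k u

/-- The observation history of all stations obtained from the common data `δy` and the
private windows `py` of all stations. -/
def mixObsAll {n : ℕ} (T t : ℕ) (δy : ℕ → ∀ j, Y j)
    (py : Fin (n + 1) → ∀ j, Y j) : ℕ → ∀ j, Y j :=
  fun s j => if s + T ≤ t then δy s j else py (idx n s) j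

/-- The action history of all stations obtained from the common data `δu` and the private
windows `pu` of all stations. -/
def mixActAll {n : ℕ} (T t : ℕ) (δu : ℕ → ∀ j, U j)
    (pu : Fin (n + 1) → ∀ j, U j) : ℕ → ∀ j, U j :=
  fun s j => if s + T ≤ t then δu s j else pu (idx n s) j

/-- The action profile `u_t^{(K)} = {γ_t^j(δ_t^{(K)}, λ_t^j)}_{j=1}^K`. -/
noncomputable def profAll {n : ℕ} (T t : ℕ) (γ : Strat Y U)
    (δy : ℕ → ∀ j, Y j) (δu : ℕ → ∀ j, U j)
    (p : (Fin (n + 1) → ∀ j, Y j) × (Fin (n + 1) → ∀ j, U j)) : ∀ j, U j :=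
  fun j => γ j t (mixObsAll T t δy p.1) (mixActAll T t δu p.2)

/-- The realization of `I_{t+1}^k` obtained from `i_t^k = (iy, iu)`, the new own
observation `y'` at time `t+1` and the private window `p` of the other stations. -/
noncomputable def newObs {n : ℕ} (T t : ℕ) (k : Fin K) (iy : ℕ → ∀ j, Y j)
    (p : (Fin (n + 1) → ∀ j, Y j) × (Fin (n + 1) → ∀ j, U j)) (y' : Y k) : ℕ → ∀ j, Y j :=
  fun s => if s = t + 1 then Function.update (fun j => iy s j) k y' else mixObs T t k iy p.1 s

/-- The action part of the realization of `I_{t+1}^k`: at time `t` station `k` applies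
`u` and the others apply their strategies. -/
noncomputable def newAct {n : ℕ} (T t : ℕ) (γ : Strat Y U) (k : Fin K)
    (iy : ℕ → ∀ j, Y j) (iu : ℕ → ∀ j, U j)
    (p : (Fin (n + 1) → ∀ j, Y j) × (Fin (n + 1) → ∀ j, U j)) (u : U k) : ℕ → ∀ j, U j :=
  fun s => if s = t then prof T t γ k iy iu p u else mixAct T t k iu p.2 s

/-! ### Dynamic programming equations (Theorem 3 (1.1)) -/

/-- The expected stage cost at time `t` under the private posterior `Ξ_t^k[i_t^k]` when
station `k` applies `u` and the other stations apply their strategies: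
`Σ_{x_t, λ_t^{-k}} ℓ(t, x_t, u_t^k, γ_t^{-k}(δ_t^{(K)}, λ_t^{-k})) Ξ_t^k[i_t^k](x_t, λ_t^{-k})`. -/
noncomputable def dpStage (n T : ℕ) (M : Kernels X Y U) (γ : Strat Y U) (k : Fin K)
    (t : ℕ) (iy : ℕ → ∀ j, Y j) (iu : ℕ → ∀ j, U j) (u : U k) : ℝ :=
  ∑ x : X, ∑ p ∈ privSet n T k t,
    M.cost t x (prof T t γ k iy iu p u) * Xi n T M γ k t iy iu x (pWinY p) (pWinU p)

/-- The expected continuation value: the function `V` at time `t+1`, evaluated at the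
updated realization `(i_t^k, y_{t+1}^k, u_t^k, y_{t-T+1}^{-k}, u_{t-T+1}^{-k})`, averaged
with the kernel
`q_{t+1}^k(dy_{t+1}^k | x_{t+1}, u) s_{t+1}(dx_{t+1} | x_t, u) Ξ_t^k[i_t^k](dx_t, dλ_t^{-k})`. -/
noncomputable def dpCont (n T : ℕ) (M : Kernels X Y U) (γ : Strat Y U) (k : Fin K)
    (t : ℕ) (iy : ℕ → ∀ j, Y j) (iu : ℕ → ∀ j, U j)
    (V : ℕ → (ℕ → ∀ j, Y j) → (ℕ → ∀ j, U j) → ℝ) (u : U k) : ℝ :=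
  ∑ y' : Y k, ∑ x : X, ∑ x' : X, ∑ p ∈ privSet n T k t,
    V (t + 1) (newObs T t k iy p y') (newAct T t γ k iy iu p u) *
      M.obs t k x' (prof T t γ k iy iu p u) y' *
      M.trans t x (prof T t γ k iy iu p u) x' *
      Xi n T M γ k t iy iu x (pWinY p) (pWinU p)

/-- `V` satisfies the dynamic programming equations of Theorem 3 (1.1) for station `k`
(with the other stations' strategies fixed to those of `γ`): at the terminal time the
minimum over the action space of the expected stage cost, and before that the minimum
over the action space of expected stage cost plus expected continuation value, on every
realization of `I_t^k` of positive probability. -/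
noncomputable def SatisfiesDP (n T : ℕ) (M : Kernels X Y U) (γ : Strat Y U) (k : Fin K)
    (V : ℕ → (ℕ → ∀ j, Y j) → (ℕ → ∀ j, U j) → ℝ) : Prop :=
  (∀ iy iu, PosInfo n T M γ k n iy iu →
      V n iy iu = ⨅ u : U k, dpStage n T M γ k n iy iu u) ∧
  (∀ t iy iu, t < n → PosInfo n T M γ k t iy iu →
      V t iy iu = ⨅ u : U k, (dpStage n T M γ k t iy iu u + dpCont n T M γ k t iy iu V u))

/-- Station `k`'s strategy in `γ` attains, at every realization of positive probability,
the minimum in the dynamic programming equations with value function `V`. -/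
noncomputable def AttainsDP (n T : ℕ) (M : Kernels X Y U) (γ : Strat Y U) (k : Fin K)
    (V : ℕ → (ℕ → ∀ j, Y j) → (ℕ → ∀ j, U j) → ℝ) : Prop :=
  (∀ iy iu, PosInfo n T M γ k n iy iu →
      V n iy iu = dpStage n T M γ k n iy iu (γ k n iy iu)) ∧
  (∀ t iy iu, t < n → PosInfo n T M γ k t iy iu →
      V t iy iu = dpStage n T M γ k t iy iu (γ k t iy iu) +
        dpCont n T M γ k t iy iu V (γ k t iy iu))

/-- The value process `𝒱_t^{γ^{k,o}, γ^{-k,o}}(i_t^k)`: the infimum, over admissible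
strategies of station `k` used from time `t` on (station `k` using `γo`'s strategy before
`t` and the other stations using `γo` throughout), of the conditional cost-to-go given
`I_t^k = i_t^k`. -/
noncomputable def Vval (n T : ℕ) (M : Kernels X Y U) (γo : Strat Y U) (k : Fin K) (t : ℕ)
    (iy : ℕ → ∀ j, Y j) (iu : ℕ → ∀ j, U j) : ℝ :=
  sInf { r : ℝ | ∃ g : SStrat Y U k,
    Admissible T (updStrat γo k (splice (γo k) g t)) ∧
    r = Jcond n M (updStrat γo k (splice (γo k) g t)) t
          (InfoEq T (updStrat γo k (splice (γo k) g t)) k t iy iu) }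

/-! ### Structured strategy classes -/

/-- Semi-separated strategies: for every station `k` and time `t`, the action depends on
the information `i_t^k` only through `(Ξ_t^k[i_t^k], δ_t^{(K)}, λ_t^k)`. -/
noncomputable def SemiSeparated (n T : ℕ) (M : Kernels X Y U) (γ : Strat Y U) : Prop :=
  ∀ (k : Fin K) (t : ℕ) (y y' : ℕ → ∀ j, Y j) (u u' : ℕ → ∀ j, U j),
    (∀ x ly lu, Xi n T M γ k t y u x ly lu = Xi n T M γ k t y' u' x ly lu) →
    (∀ s j, s + T ≤ t → y s j = y' s j) →
    (∀ s j, s + T ≤ t → u s j = u' s j) →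
    (∀ s, s ≤ t → t < s + T → y s k = y' s k) →
    (∀ s, s < t → t < s + T → u s k = u' s k) →
    γ k t y u = γ k t y' u'

/-- Separated strategies (with the centralized posterior `Π`): the action depends on
`i_t^k` only through `(Ξ_t^k[i_t^k], Π_t^{(K)}[δ_t^{(K)}], λ_t^k)`. -/
noncomputable def SeparatedPi (n T : ℕ) (M : Kernels X Y U) (γ : Strat Y U) : Prop :=
  ∀ (k : Fin K) (t : ℕ) (y y' : ℕ → ∀ j, Y j) (u u' : ℕ → ∀ j, U j),
    (∀ x ly lu, Xi n T M γ k t y u x ly lu = Xi n T M γ k t y' u' x ly lu) →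
    (∀ x, PiPost n T M γ t y u x = PiPost n T M γ t y' u' x) →
    (∀ s, s ≤ t → t < s + T → y s k = y' s k) →
    (∀ s, s < t → t < s + T → u s k = u' s k) →
    γ k t y u = γ k t y' u'

/-- Separated strategies (with the centralized posterior `Θ`): the action depends on
`i_t^k` only through `(Ξ_t^k[i_t^k], Θ_t^{γ}[δ_t^{(K)}], λ_t^k)`. -/
noncomputable def SeparatedTheta (n T : ℕ) (M : Kernels X Y U) (γ : Strat Y U) : Prop :=
  ∀ (k : Fin K) (t : ℕ) (y y' : ℕ → ∀ j, Y j) (u u' : ℕ → ∀ j, U j),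
    (∀ x ly lu, Xi n T M γ k t y u x ly lu = Xi n T M γ k t y' u' x ly lu) →
    (∀ x ly lu, ThetaPost n T M γ t y u x ly lu = ThetaPost n T M γ t y' u' x ly lu) →
    (∀ s, s ≤ t → t < s + T → y s k = y' s k) →
    (∀ s, s < t → t < s + T → u s k = u' s k) →
    γ k t y u = γ k t y' u'

/-- Information-state strategies: the action depends on `i_t^k` only through the pair
`(Ξ_t^k[i_t^k], Θ_t^{γ}[δ_t^{(K)}])`. -/
noncomputable def InfoStateTheta (n T : ℕ) (M : Kernels X Y U) (γ : Strat Y U) : Prop :=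
  ∀ (k : Fin K) (t : ℕ) (y y' : ℕ → ∀ j, Y j) (u u' : ℕ → ∀ j, U j),
    (∀ x ly lu, Xi n T M γ k t y u x ly lu = Xi n T M γ k t y' u' x ly lu) →
    (∀ x ly lu, ThetaPost n T M γ t y u x ly lu = ThetaPost n T M γ t y' u' x ly lu) →
    γ k t y u = γ k t y' u'


set_option linter.unusedSectionVars false

/-! ### Auxiliary lemmas -/

/-- Two histories agree on the coordinates of the information pattern of station `k`. -/
def IS (T : ℕ) (k : Fin K) (t : ℕ) (y : ℕ → ∀ j, Y j) (u : ℕ → ∀ j, U j)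
    (y' : ℕ → ∀ j, Y j) (u' : ℕ → ∀ j, U j) : Prop :=
  (∀ s j, s + T ≤ t → y s j = y' s j) ∧
  (∀ s j, s + T ≤ t → u s j = u' s j) ∧
  (∀ s, s ≤ t → y s k = y' s k) ∧
  (∀ s, s < t → u s k = u' s k)

section basic


theorem IS.symm {T : ℕ} {k : Fin K} {t : ℕ} {y y' : ℕ → ∀ j, Y j} {u u' : ℕ → ∀ j, U j}
    (h : IS T k t y u y' u') : IS T k t y' u' y u :=
  ⟨fun s j hs => (h.1 s j hs).symm, fun s j hs => (h.2.1 s j hs).symm,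
    fun s hs => (h.2.2.1 s hs).symm, fun s hs => (h.2.2.2 s hs).symm⟩

theorem IS.trans {T : ℕ} {k : Fin K} {t : ℕ} {y y' y'' : ℕ → ∀ j, Y j}
    {u u' u'' : ℕ → ∀ j, U j}
    (h : IS T k t y u y' u') (h' : IS T k t y' u' y'' u'') : IS T k t y u y'' u'' :=
  ⟨fun s j hs => (h.1 s j hs).trans (h'.1 s j hs),
    fun s j hs => (h.2.1 s j hs).trans (h'.2.1 s j hs),
    fun s hs => (h.2.2.1 s hs).trans (h'.2.2.1 s hs),
    fun s hs => (h.2.2.2 s hs).trans (h'.2.2.2 s hs)⟩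

theorem IS.mono {T : ℕ} {k : Fin K} {t t' : ℕ} {y y' : ℕ → ∀ j, Y j} {u u' : ℕ → ∀ j, U j}
    (htt : t ≤ t') (h : IS T k t' y u y' u') : IS T k t y u y' u' :=
  ⟨fun s j hs => h.1 s j (hs.trans htt), fun s j hs => h.2.1 s j (hs.trans htt),
    fun s hs => h.2.2.1 s (hs.trans htt), fun s hs => h.2.2.2 s (hs.trans_le htt)⟩

theorem IS.refl (T : ℕ) (k : Fin K) (t : ℕ) (y : ℕ → ∀ j, Y j) (u : ℕ → ∀ j, U j) :
    IS T k t y u y u :=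
  ⟨fun _ _ _ => rfl, fun _ _ _ => rfl, fun _ _ => rfl, fun _ _ => rfl⟩

theorem adm_iff (T : ℕ) (γ : Strat Y U) : Admissible T γ ↔
    ∀ k t y y' u u', IS T k t y u y' u' → γ k t y u = γ k t y' u' :=
  ⟨fun h k t y y' u u' hs => h k t y y' u u' hs.1 hs.2.1 hs.2.2.1 hs.2.2.2,
   fun h k t y y' u u' h1 h2 h3 h4 => h k t y y' u u' ⟨h1, h2, h3, h4⟩⟩

theorem updStrat_same (γ : Strat Y U) (k : Fin K) (g : SStrat Y U k) :
    updStrat γ k g k = g := by simp [updStrat]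

theorem updStrat_ne (γ : Strat Y U) (k : Fin K) (g : SStrat Y U k) {j : Fin K} (h : j ≠ k) :
    updStrat γ k g j = γ j := by simp [updStrat, h]

theorem updStrat_upd (γ : Strat Y U) (k : Fin K) (g g' : SStrat Y U k) :
    updStrat (updStrat γ k g) k g' = updStrat γ k g' := by
  funext j
  by_cases h : j = k
  · subst h; simp [updStrat_same]
  · simp [updStrat_ne _ _ _ h]

theorem updStrat_self (γ : Strat Y U) (k : Fin K) :
    updStrat γ k (γ k) = γ := by
  funext j
  by_cases h : j = k
  · subst h; simp [updStrat_same]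
  · simp [updStrat_ne _ _ _ h]

theorem adm_upd {T : ℕ} {γ : Strat Y U} (hA : Admissible T γ) (k : Fin K) (g : SStrat Y U k)
    (hg : ∀ t y y' u u', IS T k t y u y' u' → g t y u = g t y' u') :
    Admissible T (updStrat γ k g) := by
  rw [adm_iff] at hA ⊢
  intro j t y y' u u' hs
  by_cases h : j = k
  · subst h; rw [updStrat_same]; exact hg _ _ _ _ _ hs
  · rw [updStrat_ne _ _ _ h]; exact hA _ _ _ _ _ _ hs

theorem idx_val {n s : ℕ} (h : s ≤ n) : (idx n s).1 = s := by simp [idx, h]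

theorem idx_fin {n : ℕ} (s : Fin (n + 1)) : idx n s.1 = s := by
  apply Fin.ext; simp [idx]; omega

theorem idx_ne {n s t : ℕ} (h : s ≤ n) (h' : t ≤ n) (hst : s ≠ t) : idx n s ≠ idx n t := by
  intro e; apply hst; rw [← idx_val h, ← idx_val h', e]

end basic

section acts


theorem actUpto_eq (γ : Strat Y U) (y : ℕ → ∀ j, Y j) (t s : ℕ) (h : s < t) :
    actUpto γ y t s = act γ y s := by
  induction t with
  | zero => omega
  | succ t ih =>
    simp only [actUpto]
    split_ifs with hs
    · subst hs; rfl
    · exact ih (by omega)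

theorem act_spec {T : ℕ} (hT : 1 ≤ T) {γ : Strat Y U} (hA : Admissible T γ)
    (y : ℕ → ∀ j, Y j) (t : ℕ) (j : Fin K) (y' : ℕ → ∀ j, Y j) (u' : ℕ → ∀ j, U j)
    (h : IS T j t y (act γ y) y' u') : act γ y t j = γ j t y' u' := by
  obtain ⟨h1, h2, h3, h4⟩ := h
  change γ j t y (actUpto γ y t) = _
  apply hA j t
  · exact h1
  · intro s i hs
    rw [actUpto_eq _ _ _ _ (by omega)]; exact h2 s i hs
  · exact h3
  · intro s hs
    rw [actUpto_eq _ _ _ _ hs]; exact h4 s hs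

theorem act_unique {T : ℕ} (hT : 1 ≤ T) {γ : Strat Y U} (hA : Admissible T γ)
    (y : ℕ → ∀ j, Y j) (u : ℕ → ∀ j, U j) (t : ℕ)
    (h : ∀ s, s < t → ∀ j, u s j = γ j s y u) : ∀ s, s < t → act γ y s = u s := by
  intro s
  induction s using Nat.strong_induction_on with
  | _ s ih =>
    intro hs
    funext j
    rw [h s hs j]
    apply act_spec hT hA
    exact ⟨fun _ _ _ => rfl, fun r i hr => by rw [ih r (by omega) (by omega)],
      fun _ _ => rfl, fun r hr => by rw [ih r (by omega) (by omega)]⟩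

theorem act_self {T : ℕ} (hT : 1 ≤ T) {γ : Strat Y U} (hA : Admissible T γ)
    (y : ℕ → ∀ j, Y j) (t : ℕ) (j : Fin K) : act γ y t j = γ j t y (act γ y) :=
  act_spec hT hA _ _ _ _ _ (IS.refl _ _ _ _ _)

theorem act_congr {T : ℕ} (hT : 1 ≤ T) {γ : Strat Y U} (hA : Admissible T γ)
    (y y' : ℕ → ∀ j, Y j) (t : ℕ) (h : ∀ s, s ≤ t → y s = y' s) : act γ y t = act γ y' t := by
  refine act_unique hT hA y (act γ y') (t + 1) ?_ t (by omega)
  intro s hs j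
  rw [act_spec hT hA y' s j y (act γ y')]
  exact ⟨fun r i hr => by rw [h r (by omega)], fun _ _ _ => rfl,
    fun r hr => by rw [h r (by omega)], fun _ _ => rfl⟩

theorem act_strat {T : ℕ} (hT : 1 ≤ T) {γ γ' : Strat Y U} (hA : Admissible T γ)
    (hA' : Admissible T γ')
    (y : ℕ → ∀ j, Y j) (t : ℕ) (h : ∀ s, s < t → ∀ j, γ j s = γ' j s) :
    ∀ s, s < t → act γ y s = act γ' y s := by
  refine act_unique hT hA y (act γ' y) t ?_
  intro s hs j
  rw [act_self hT hA', h s hs j]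

end acts

section markov


/-- Agreement of trajectories up to time `m`. -/
def AgUp {n : ℕ} (m : ℕ) (ω ω' : Traj n X Y) : Prop :=
  ∀ s, s ≤ m → ω.1 (idx n s) = ω'.1 (idx n s) ∧ ω.2 (idx n s) = ω'.2 (idx n s)

/-- Change of one coordinate of a trajectory. -/
noncomputable def updT {n : ℕ} (ω : Traj n X Y) (i : Fin (n + 1)) (z : X × (∀ j, Y j)) : Traj n X Y :=
  (Function.update ω.1 i z.1, Function.update ω.2 i z.2)

theorem sum_updT {n : ℕ} (i : Fin (n + 1)) (Φ : Traj n X Y → ℝ) :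
    (Fintype.card (X × (∀ j, Y j)) : ℝ) * ∑ ω, Φ ω = ∑ ω, ∑ z, Φ (updT ω i z) := by
  have hinv : Function.Involutive
      (fun q : Traj n X Y × (X × (∀ j, Y j)) => (updT q.1 i q.2, (q.1.1 i, q.1.2 i))) := by
    rintro ⟨⟨a, b⟩, ⟨c, d⟩⟩
    simp [updT]
  have h1 : ∑ q : Traj n X Y × (X × (∀ j, Y j)), Φ (updT q.1 i q.2)
      = ∑ q : Traj n X Y × (X × (∀ j, Y j)), Φ q.1 :=
    Equiv.sum_comp (hinv.toPerm) (fun q : Traj n X Y × (X × (∀ j, Y j)) => Φ q.1)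
  have e1 := Fintype.sum_prod_type
    (fun q : Traj n X Y × (X × (∀ j, Y j)) => Φ (updT q.1 i q.2))
  have e2 := Fintype.sum_prod_type (fun q : Traj n X Y × (X × (∀ j, Y j)) => Φ q.1)
  rw [← e1, h1, e2]
  simp only [Finset.sum_const, nsmul_eq_mul, Finset.mul_sum, Finset.card_univ]

/-- One-step kernel. -/
noncomputable def stepK (M : Kernels X Y U) (t : ℕ) (x : X) (u : ∀ j, U j)
    (z : X × (∀ j, Y j)) : ℝ :=
  M.trans t x u z.1 * ∏ k, M.obs t k z.1 u (z.2 k)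

/-- Partial path probabilities. -/
noncomputable def probm {n : ℕ} (M : Kernels X Y U) (γ : Strat Y U) (m : ℕ) (ω : Traj n X Y) : ℝ :=
  M.prior (stateAt ω 0) * (∏ k, M.obs0 k (stateAt ω 0) (obsAt ω 0 k)) *
    ∏ t ∈ Finset.range m, stepK M t (stateAt ω t) (actAt γ ω t)
      (ω.1 (idx n (t + 1)), ω.2 (idx n (t + 1)))

theorem prob_eq_probm {n : ℕ} (M : Kernels X Y U) (γ : Strat Y U) (ω : Traj n X Y) :
    prob n M γ ω = probm M γ n ω := rfl

theorem probm_succ {n : ℕ} (M : Kernels X Y U) (γ : Strat Y U) (m : ℕ) (ω : Traj n X Y) :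
    probm M γ (m + 1) ω = probm M γ m ω * stepK M m (stateAt ω m) (actAt γ ω m)
      (ω.1 (idx n (m + 1)), ω.2 (idx n (m + 1))) := by
  simp only [probm, Finset.prod_range_succ]; ring

theorem prob_nonneg {n : ℕ} (M : Kernels X Y U) (hM : M.IsPMF) (γ : Strat Y U)
    (ω : Traj n X Y) : 0 ≤ prob n M γ ω := by
  obtain ⟨h1, h2, h3, h4, h5⟩ := hM
  refine mul_nonneg (mul_nonneg (h1 _) (Finset.prod_nonneg fun k _ => (h3 k _).1 _))
    (Finset.prod_nonneg fun t _ => mul_nonneg ((h4 _ _ _).1 _)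
      (Finset.prod_nonneg fun k _ => (h5 _ k _ _).1 _))

theorem actAt_congr {n T : ℕ} (hT : 1 ≤ T) {γ : Strat Y U} (hA : Admissible T γ)
    {m : ℕ} {ω ω' : Traj n X Y} (h : AgUp m ω ω') {s : ℕ} (hs : s ≤ m) :
    actAt γ ω s = actAt γ ω' s :=
  act_congr hT hA _ _ _ (fun r hr => (h r (by omega)).2)

theorem probm_congr {n T : ℕ} (hT : 1 ≤ T) (M : Kernels X Y U) {γ : Strat Y U}
    (hA : Admissible T γ) {m : ℕ} {ω ω' : Traj n X Y} (h : AgUp m ω ω') :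
    probm M γ m ω = probm M γ m ω' := by
  unfold probm
  have h0 : stateAt ω 0 = stateAt ω' 0 := (h 0 (by omega)).1
  have h1 : ∀ k, obsAt ω 0 k = obsAt ω' 0 k := fun k => congrFun (h 0 (by omega)).2 k
  rw [h0]
  simp only [h1]
  congr 1
  apply Finset.prod_congr rfl
  intro t ht
  have ht' := Finset.mem_range.1 ht
  rw [actAt_congr hT hA h (show t ≤ m by omega), (h (t+1) (by omega)).1, (h (t+1) (by omega)).2,
    show stateAt ω t = stateAt ω' t from (h t (by omega)).1]

theorem probm_strat {n T : ℕ} (hT : 1 ≤ T) (M : Kernels X Y U) {γ γ' : Strat Y U}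
    (hA : Admissible T γ) (hA' : Admissible T γ') {m : ℕ}
    (h : ∀ s, s < m → ∀ j, γ j s = γ' j s) (ω : Traj n X Y) :
    probm M γ m ω = probm M γ' m ω := by
  unfold probm
  congr 1
  apply Finset.prod_congr rfl
  intro t ht
  have ht' := Finset.mem_range.1 ht
  rw [show actAt γ ω t = actAt γ' ω t from act_strat hT hA hA' _ m h t ht']

theorem agUp_updT {n m : ℕ} (hm : m < n) (ω : Traj n X Y) (z : X × (∀ j, Y j)) :
    AgUp m (updT ω (idx n (m + 1)) z) ω := by
  intro s hs
  have := idx_ne (n := n) (s := s) (t := m + 1) (by omega) (by omega) (by omega)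
  simp [updT, Function.update_of_ne this]

theorem markov_step {n T : ℕ} (hT : 1 ≤ T) (M : Kernels X Y U) {γ : Strat Y U}
    (hA : Admissible T γ) {m : ℕ} (hm : m < n) (ψ : Traj n X Y → X × (∀ j, Y j) → ℝ)
    (hψ : ∀ ω ω', AgUp m ω ω' → ψ ω = ψ ω') :
    (Fintype.card (X × (∀ j, Y j)) : ℝ) *
      ∑ ω, probm M γ (m + 1) ω * ψ ω (ω.1 (idx n (m + 1)), ω.2 (idx n (m + 1))) =
    ∑ ω, probm M γ m ω * ∑ z, stepK M m (stateAt ω m) (actAt γ ω m) z * ψ ω z := by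
  rw [sum_updT (idx n (m + 1))]
  apply Finset.sum_congr rfl
  intro ω _
  rw [Finset.mul_sum]
  apply Finset.sum_congr rfl
  intro z _
  have hz := agUp_updT hm ω z
  rw [probm_succ, probm_congr hT M hA hz, hψ _ _ hz, actAt_congr hT hA hz le_rfl,
    show stateAt (updT ω (idx n (m + 1)) z) m = stateAt ω m from (hz m le_rfl).1]
  simp [updT]
  ring

theorem stepK_sum (M : Kernels X Y U) (hM : M.IsPMF) (t : ℕ) (x : X) (u : ∀ j, U j) :
    ∑ z, stepK M t x u z = 1 := by
  obtain ⟨h1, h2, h3, h4, h5⟩ := hM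
  rw [Fintype.sum_prod_type]
  simp only [stepK, ← Finset.mul_sum]
  rw [← (h4 t x u).2]
  apply Finset.sum_congr rfl
  intro x' _
  have := Finset.prod_univ_sum (fun j : Fin K => (Finset.univ : Finset (Y j)))
    (fun j y => M.obs t j x' u y)
  rw [Fintype.piFinset_univ] at this
  rw [← this]
  simp [(h5 _ _ _ _).2]

theorem stepK_sum_own (M : Kernels X Y U) (hM : M.IsPMF) (t : ℕ) (x : X) (u : ∀ j, U j)
    (k : Fin K) (φ : Y k → ℝ) :
    ∑ z, stepK M t x u z * φ (z.2 k) =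
      ∑ y' : Y k, ∑ x' : X, φ y' * M.obs t k x' u y' * M.trans t x u x' := by
  obtain ⟨h1, h2, h3, h4, h5⟩ := hM
  rw [Fintype.sum_prod_type, Finset.sum_comm (s := (Finset.univ : Finset (Y k)))]
  apply Finset.sum_congr rfl
  intro x' _
  let f : ∀ j : Fin K, Y j → ℝ := fun j z =>
    M.obs t j x' u z * (if h : j = k then φ (h ▸ z) else 1)
  have := Finset.prod_univ_sum (fun j : Fin K => (Finset.univ : Finset (Y j))) f
  rw [Fintype.piFinset_univ] at this
  have hf : ∀ z : ∀ j, Y j, ∏ j, f j (z j) = (∏ j, M.obs t j x' u (z j)) * φ (z k) := by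
    intro z
    simp only [f]
    rw [Finset.prod_mul_distrib]
    congr 1
    rw [Finset.prod_eq_single k]
    · simp
    · intro j _ hj; simp [hj]
    · simp
  simp only [hf] at this
  have hk : ∏ j, ∑ z, f j z = ∑ z, M.obs t k x' u z * φ z := by
    rw [Finset.prod_eq_single k]
    · simp [f]
    · intro j _ hj; simp [f, hj, (h5 _ _ _ _).2]
    · simp
  rw [hk] at this
  simp only [stepK, mul_assoc, ← Finset.mul_sum]
  rw [← this, Finset.mul_sum]
  apply Finset.sum_congr rfl
  intro z _
  ring

theorem tail_sum {n T : ℕ} (hT : 1 ≤ T) (M : Kernels X Y U) (hM : M.IsPMF) {γ : Strat Y U}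
    (hA : Admissible T γ) {m : ℕ} (F : Traj n X Y → ℝ)
    (hF : ∀ ω ω', AgUp m ω ω' → F ω = F ω') (d : ℕ) (hd : m + d ≤ n) :
    (Fintype.card (X × (∀ j, Y j)) : ℝ) ^ d * ∑ ω, probm M γ (m + d) ω * F ω =
      ∑ ω, probm M γ m ω * F ω := by
  induction d with
  | zero => simp
  | succ d ih =>
    rw [← ih (by omega), pow_succ, mul_assoc]
    congr 1
    have := markov_step hT M hA (m := m + d) (n := n) (by omega) (fun ω _ => F ω)
      (fun ω ω' h => by
        funext _
        exact hF _ _ (fun s hs => h s (by omega)))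
    rw [← add_assoc, this]
    simp only [← Finset.sum_mul, stepK_sum M hM, one_mul]

/-- Expectations of functions of the path up to time `m` only depend on the strategies at
times `< m`. -/
theorem expect_strat [Nonempty X] [∀ k, Nonempty (Y k)]
    {n T : ℕ} (hT : 1 ≤ T) (M : Kernels X Y U) (hM : M.IsPMF) {γ γ' : Strat Y U}
    (hA : Admissible T γ) (hA' : Admissible T γ') {m : ℕ} (hm : m ≤ n)
    (h : ∀ s, s < m → ∀ j, γ j s = γ' j s) (F : Traj n X Y → ℝ)
    (hF : ∀ ω ω', AgUp m ω ω' → F ω = F ω') :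
    ∑ ω, prob n M γ ω * F ω = ∑ ω, prob n M γ' ω * F ω := by
  have e1 := tail_sum hT M hM hA F hF (n - m) (by omega)
  have e2 := tail_sum hT M hM hA' F hF (n - m) (by omega)
  rw [Nat.add_sub_cancel' hm] at e1 e2
  simp only [probm_strat hT M hA hA' h] at e1
  have hc : (Fintype.card (X × (∀ j, Y j)) : ℝ) ^ (n - m) ≠ 0 :=
    pow_ne_zero _ (by exact_mod_cast Fintype.card_ne_zero)
  simp only [prob_eq_probm]
  exact mul_left_cancel₀ hc (e1.trans e2.symm)

theorem markov_full [Nonempty X] [∀ k, Nonempty (Y k)]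
    {n T : ℕ} (hT : 1 ≤ T) (M : Kernels X Y U) (hM : M.IsPMF) {γ : Strat Y U}
    (hA : Admissible T γ) {m : ℕ} (hm : m < n) (ψ : Traj n X Y → X × (∀ j, Y j) → ℝ)
    (hψ : ∀ ω ω', AgUp m ω ω' → ψ ω = ψ ω') :
    ∑ ω, prob n M γ ω * ψ ω (ω.1 (idx n (m + 1)), ω.2 (idx n (m + 1))) =
    ∑ ω, prob n M γ ω * ∑ z, stepK M m (stateAt ω m) (actAt γ ω m) z * ψ ω z := by
  have e0 := markov_step hT M hA hm ψ hψ
  have e1 := tail_sum (m := m + 1) hT M hM hA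
    (fun ω => ψ ω (ω.1 (idx n (m + 1)), ω.2 (idx n (m + 1))))
    (fun ω ω' h => by
      rw [hψ ω ω' (fun s hs => h s (by omega)), (h (m+1) le_rfl).1, (h (m+1) le_rfl).2])
    (n - (m + 1)) (by omega)
  have e2 := tail_sum (m := m) hT M hM hA
    (fun ω => ∑ z, stepK M m (stateAt ω m) (actAt γ ω m) z * ψ ω z)
    (fun ω ω' h => by
      rw [hψ ω ω' h, actAt_congr hT hA h le_rfl,
        show stateAt ω m = stateAt ω' m from (h m le_rfl).1])
    (n - m) (by omega)
  rw [Nat.add_sub_cancel' hm] at e1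
  rw [Nat.add_sub_cancel' hm.le] at e2
  have hc : (Fintype.card (X × (∀ j, Y j)) : ℝ) ^ (n - m) ≠ 0 :=
    pow_ne_zero _ (by exact_mod_cast Fintype.card_ne_zero)
  simp only [prob_eq_probm]
  apply mul_left_cancel₀ hc
  rw [e2, ← e0, ← e1, show n - m = (n - (m + 1)) + 1 by omega, pow_succ]
  ring

end markov

section windows

/-- The observation path of a trajectory. -/
def obsP {n : ℕ} (ω : Traj n X Y) : ℕ → ∀ j, Y j := fun s => ω.2 (idx n s)

/-- The realized private window of the stations other than `k`. -/
noncomputable def win {n : ℕ} (T : ℕ) (γ : Strat Y U) (k : Fin K) (t : ℕ) (ω : Traj n X Y) :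
    (Fin (n + 1) → ∀ j, Y j) × (Fin (n + 1) → ∀ j, U j) :=
  (fun s j => if j ≠ k ∧ s.1 ≤ t ∧ t < s.1 + T then ω.2 s j else Classical.arbitrary (Y j),
   fun s j => if j ≠ k ∧ s.1 < t ∧ t < s.1 + T then actAt γ ω s.1 j
      else Classical.arbitrary (U j))

theorem infoEq_iff {n : ℕ} (T : ℕ) (γ : Strat Y U) (k : Fin K) (t : ℕ)
    (iy : ℕ → ∀ j, Y j) (iu : ℕ → ∀ j, U j) (ω : Traj n X Y) :
    InfoEq T γ k t iy iu ω ↔ IS T k t (obsP ω) (actAt γ ω) iy iu := Iff.rfl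

theorem infoEq_congr {n : ℕ} {T : ℕ} (γ : Strat Y U) {k : Fin K} {t : ℕ}
    {iy iy' : ℕ → ∀ j, Y j} {iu iu' : ℕ → ∀ j, U j} (h : IS T k t iy iu iy' iu') :
    (InfoEq T γ k t iy iu : Traj n X Y → Prop) = InfoEq T γ k t iy' iu' := by
  funext ω
  apply propext
  rw [infoEq_iff, infoEq_iff]
  exact ⟨fun h' => h'.trans h, fun h' => h'.trans h.symm⟩

theorem infoEq_agUp {n T : ℕ} (hT : 1 ≤ T) {γ : Strat Y U} (hA : Admissible T γ) {k : Fin K}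
    {t : ℕ} {iy : ℕ → ∀ j, Y j} {iu : ℕ → ∀ j, U j} {ω ω' : Traj n X Y} (h : AgUp t ω ω') :
    InfoEq T γ k t iy iu ω ↔ InfoEq T γ k t iy iu ω' := by
  have : IS T k t (obsP ω) (actAt γ ω) (obsP ω') (actAt γ ω') :=
    ⟨fun s j hs => congrFun (h s (by omega)).2 j,
     fun s j hs => by rw [actAt_congr hT hA h (show s ≤ t by omega)],
     fun s hs => congrFun (h s (by omega)).2 k,
     fun s hs => by rw [actAt_congr hT hA h (show s ≤ t by omega)]⟩
  rw [infoEq_iff, infoEq_iff]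
  exact ⟨fun h' => this.symm.trans h', fun h' => this.trans h'⟩

theorem win_agUp {n T : ℕ} (hT : 1 ≤ T) {γ : Strat Y U} (hA : Admissible T γ) {k : Fin K}
    {t : ℕ} {ω ω' : Traj n X Y} (h : AgUp t ω ω') :
    win T γ k t ω = win T γ k t ω' := by
  unfold win
  congr 1
  · funext s j
    split_ifs with hs
    · have := (h s.1 hs.2.1).2
      rw [idx_fin] at this
      rw [this]
    · rfl
  · funext s j
    split_ifs with hs
    · rw [actAt_congr hT hA h hs.2.1.le]
    · rfl

theorem win_mem {n : ℕ} (T : ℕ) (γ : Strat Y U) (k : Fin K) (t : ℕ) (ω : Traj n X Y) :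
    win T γ k t ω ∈ privSet n T k t := by
  unfold privSet win
  rw [Finset.mem_filter]
  exact ⟨Finset.mem_univ _, fun s j hs => if_neg hs, fun s j hs => if_neg hs⟩

theorem win_iff {n : ℕ} (T : ℕ) (γ : Strat Y U) (k : Fin K) (t : ℕ) (ht : t ≤ n)
    (ω : Traj n X Y) (p : (Fin (n + 1) → ∀ j, Y j) × (Fin (n + 1) → ∀ j, U j))
    (hp : p ∈ privSet n T k t) :
    PrivOthersEq T γ k t (pWinY p) (pWinU p) ω ↔ p = win T γ k t ω := by
  unfold privSet at hp
  rw [Finset.mem_filter] at hp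
  obtain ⟨-, hp1, hp2⟩ := hp
  constructor
  · rintro ⟨h1, h2⟩
    refine Prod.ext ?_ ?_
    · funext s j
      by_cases hs : j ≠ k ∧ s.1 ≤ t ∧ t < s.1 + T
      · have := h1 s.1 j hs.1 hs.2.1 hs.2.2
        simp only [obsAt, pWinY, idx_fin] at this
        simp only [win, if_pos hs, this]
      · rw [hp1 s j hs]; simp only [win, if_neg hs]
    · funext s j
      by_cases hs : j ≠ k ∧ s.1 < t ∧ t < s.1 + T
      · have := h2 s.1 j hs.1 hs.2.1 hs.2.2
        simp only [pWinU, idx_fin] at this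
        simp only [win, if_pos hs, this]
      · rw [hp2 s j hs]; simp only [win, if_neg hs]
  · intro h
    subst h
    constructor
    · intro s j hj hs hs'
      have e : (idx n s).1 = s := idx_val (by omega)
      simp only [pWinY, win, e]
      rw [if_pos ⟨hj, hs, hs'⟩]; rfl
    · intro s j hj hs hs'
      have e : (idx n s).1 = s := idx_val (by omega)
      simp only [pWinU, win, e]
      rw [if_pos ⟨hj, hs, hs'⟩]

theorem sum_Xi {n : ℕ} (T : ℕ) (M : Kernels X Y U) (γ : Strat Y U) (k : Fin K) (t : ℕ)
    (ht : t ≤ n) (iy : ℕ → ∀ j, Y j) (iu : ℕ → ∀ j, U j)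
    (Φ : X → (Fin (n + 1) → ∀ j, Y j) × (Fin (n + 1) → ∀ j, U j) → ℝ) :
    ∑ x : X, ∑ p ∈ privSet n T k t, Φ x p * Xi n T M γ k t iy iu x (pWinY p) (pWinU p) =
    (∑ ω : Traj n X Y, if InfoEq T γ k t iy iu ω then
      prob n M γ ω * Φ (stateAt ω t) (win T γ k t ω) else 0) /
      Pr n M γ (InfoEq T γ k t iy iu) := by
  have h1 : ∀ x : X, ∀ p ∈ privSet n T k t,
      Φ x p * Xi n T M γ k t iy iu x (pWinY p) (pWinU p) =
      (∑ ω : Traj n X Y, if stateAt ω t = x then (if p = win T γ k t ω then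
        (if InfoEq T γ k t iy iu ω then prob n M γ ω * Φ x p else 0) else 0) else 0) /
        Pr n M γ (InfoEq T γ k t iy iu) := by
    intro x p hp
    unfold Xi condPr
    rw [← mul_div_assoc]
    congr 1
    unfold Pr
    rw [Finset.mul_sum]
    apply Finset.sum_congr rfl
    intro ω _
    simp only [win_iff T γ k t ht ω p hp]
    by_cases a : stateAt ω t = x <;> by_cases b : p = win T γ k t ω <;>
      by_cases c : InfoEq T γ k t iy iu ω <;> simp [a, b, c, mul_comm]
  rw [Finset.sum_congr rfl (fun x _ => Finset.sum_congr rfl (h1 x))]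
  simp only [← Finset.sum_div]
  congr 1
  rw [Finset.sum_congr rfl (fun x _ => Finset.sum_comm), Finset.sum_comm]
  apply Finset.sum_congr rfl
  intro ω _
  rw [Finset.sum_eq_single (stateAt ω t)]
  · rw [Finset.sum_eq_single (win T γ k t ω)]
    · simp
    · intro p _ hp; simp [hp]
    · intro h; exact absurd (win_mem T γ k t ω) h
  · intro x _ hx
    apply Finset.sum_eq_zero
    intro p _
    rw [if_neg (Ne.symm hx)]
  · simp

theorem mix_obs {n : ℕ} {T : ℕ} {γ : Strat Y U} {k : Fin K} {t : ℕ} (ht : t ≤ n)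
    {iy : ℕ → ∀ j, Y j} {iu : ℕ → ∀ j, U j} {ω : Traj n X Y}
    (h : InfoEq T γ k t iy iu ω) (s : ℕ) (hs : s ≤ t) (j : Fin K) :
    mixObs T t k iy (win T γ k t ω).1 s j = obsP ω s j := by
  have e : (idx n s).1 = s := idx_val (by omega)
  unfold mixObs
  split_ifs with hc
  · by_cases hj : j = k
    · subst hj; exact (h.2.2.1 s hs).symm
    · exact (h.1 s j (by tauto)).symm
  · simp only [win, e]
    rw [if_pos ⟨by tauto, hs, by omega⟩]; rfl

theorem mix_act {n : ℕ} {T : ℕ} {γ : Strat Y U} {k : Fin K} {t : ℕ} (ht : t ≤ n)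
    {iy : ℕ → ∀ j, Y j} {iu : ℕ → ∀ j, U j} {ω : Traj n X Y}
    (h : InfoEq T γ k t iy iu ω) (s : ℕ) (hs : s < t) (j : Fin K) :
    mixAct T t k iu (win T γ k t ω).2 s j = actAt γ ω s j := by
  have e : (idx n s).1 = s := idx_val (by omega)
  unfold mixAct
  split_ifs with hc
  · by_cases hj : j = k
    · subst hj; exact (h.2.2.2 s hs).symm
    · exact (h.2.1 s j (by tauto)).symm
  · simp only [win, e]
    rw [if_pos ⟨by tauto, hs, by omega⟩]

theorem prof_eq {n : ℕ} {T : ℕ} (hT : 1 ≤ T) {γ : Strat Y U} (hA : Admissible T γ)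
    {k : Fin K} {t : ℕ} (ht : t ≤ n)
    {iy : ℕ → ∀ j, Y j} {iu : ℕ → ∀ j, U j} {ω : Traj n X Y}
    (h : InfoEq T γ k t iy iu ω) (u : U k) :
    prof T t γ k iy iu (win T γ k t ω) u = Function.update (actAt γ ω t) k u := by
  unfold prof
  congr 1
  funext j
  symm
  apply act_spec hT hA
  exact ⟨fun s i hs => (mix_obs ht h s (by omega) i).symm,
    fun s i hs => (mix_act ht h s (by omega) i).symm,
    fun s hs => (mix_obs ht h s hs j).symm,
    fun s hs => (mix_act ht h s hs j).symm⟩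

theorem own_act {n : ℕ} {T : ℕ} (hT : 1 ≤ T) {γ : Strat Y U} (hA : Admissible T γ)
    {k : Fin K} {t : ℕ}
    {iy : ℕ → ∀ j, Y j} {iu : ℕ → ∀ j, U j} {ω : Traj n X Y}
    (h : InfoEq T γ k t iy iu ω) : actAt γ ω t k = γ k t iy iu :=
  act_spec hT hA _ _ _ _ _ h

theorem prof_own {n : ℕ} {T : ℕ} (hT : 1 ≤ T) {γ : Strat Y U} (hA : Admissible T γ)
    {k : Fin K} {t : ℕ} (ht : t ≤ n)
    {iy : ℕ → ∀ j, Y j} {iu : ℕ → ∀ j, U j} {ω : Traj n X Y}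
    (h : InfoEq T γ k t iy iu ω) :
    prof T t γ k iy iu (win T γ k t ω) (γ k t iy iu) = actAt γ ω t := by
  rw [prof_eq hT hA ht h, ← own_act hT hA h, Function.update_eq_self]

theorem new_IS {n : ℕ} {T : ℕ} (hT : 1 ≤ T) {γ : Strat Y U} (hA : Admissible T γ)
    {k : Fin K} {t : ℕ} (ht : t < n)
    {iy : ℕ → ∀ j, Y j} {iu : ℕ → ∀ j, U j} {ω : Traj n X Y}
    (h : InfoEq T γ k t iy iu ω) :
    IS T k (t + 1) (newObs T t k iy (win T γ k t ω) (ω.2 (idx n (t + 1)) k))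
      (newAct T t γ k iy iu (win T γ k t ω) (γ k t iy iu)) (obsP ω) (actAt γ ω) := by
  have hO : ∀ s, s ≤ t → ∀ j, newObs T t k iy (win T γ k t ω) (ω.2 (idx n (t + 1)) k) s j
      = obsP ω s j := by
    intro s hs j
    unfold newObs
    rw [if_neg (by omega)]
    exact mix_obs ht.le h s hs j
  have hU : ∀ s, s ≤ t → ∀ j, newAct T t γ k iy iu (win T γ k t ω) (γ k t iy iu) s j
      = actAt γ ω s j := by
    intro s hs j
    unfold newAct
    split_ifs with e
    · subst e; rw [prof_own hT hA ht.le h]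
    · exact mix_act ht.le h s (by omega) j
  refine ⟨fun s j hs => hO s (by omega) j, fun s j hs => hU s (by omega) j, ?_,
    fun s hs => hU s (by omega) k⟩
  intro s hs
  by_cases e : s = t + 1
  · subst e
    simp [newObs, obsP]
  · exact hO s (by omega) k

theorem dpStage_eq {n : ℕ} {T : ℕ} (hT : 1 ≤ T) (M : Kernels X Y U) {γ : Strat Y U}
    (hA : Admissible T γ) (k : Fin K) {t : ℕ} (ht : t ≤ n)
    (iy : ℕ → ∀ j, Y j) (iu : ℕ → ∀ j, U j) (u : U k) :
    dpStage n T M γ k t iy iu u =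
    (∑ ω : Traj n X Y, if InfoEq T γ k t iy iu ω then
      prob n M γ ω * M.cost t (stateAt ω t) (Function.update (actAt γ ω t) k u) else 0) /
      Pr n M γ (InfoEq T γ k t iy iu) := by
  unfold dpStage
  rw [sum_Xi T M γ k t ht iy iu (fun x p => M.cost t x (prof T t γ k iy iu p u))]
  congr 1
  apply Finset.sum_congr rfl
  intro ω _
  split_ifs with h
  · rw [prof_eq hT hA ht h]
  · rfl

theorem dpCont_eq [Nonempty X] {n : ℕ} {T : ℕ} (hT : 1 ≤ T) (M : Kernels X Y U) (hM : M.IsPMF)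
    {γ : Strat Y U} (hA : Admissible T γ) (k : Fin K) {t : ℕ} (ht : t < n)
    (iy : ℕ → ∀ j, Y j) (iu : ℕ → ∀ j, U j)
    (V : ℕ → (ℕ → ∀ j, Y j) → (ℕ → ∀ j, U j) → ℝ)
    (hV : ∀ y u y' u', IS T k (t + 1) y u y' u' → V (t + 1) y u = V (t + 1) y' u') :
    dpCont n T M γ k t iy iu V (γ k t iy iu) =
    (∑ ω : Traj n X Y, if InfoEq T γ k t iy iu ω then
      prob n M γ ω * V (t + 1) (obsP ω) (actAt γ ω) else 0) /
      Pr n M γ (InfoEq T γ k t iy iu) := by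
  have e1 : dpCont n T M γ k t iy iu V (γ k t iy iu) =
      ∑ x : X, ∑ p ∈ privSet n T k t, (∑ y' : Y k, ∑ x' : X,
        V (t + 1) (newObs T t k iy p y') (newAct T t γ k iy iu p (γ k t iy iu)) *
        M.obs t k x' (prof T t γ k iy iu p (γ k t iy iu)) y' *
        M.trans t x (prof T t γ k iy iu p (γ k t iy iu)) x') *
        Xi n T M γ k t iy iu x (pWinY p) (pWinU p) := by
    unfold dpCont
    rw [Finset.sum_comm]
    apply Finset.sum_congr rfl
    intro x _
    simp only [Finset.sum_mul]
    symm
    rw [Finset.sum_comm]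
    apply Finset.sum_congr rfl
    intro y' _
    rw [Finset.sum_comm]
  rw [e1, sum_Xi T M γ k t ht.le iy iu (fun x p => ∑ y' : Y k, ∑ x' : X,
        V (t + 1) (newObs T t k iy p y') (newAct T t γ k iy iu p (γ k t iy iu)) *
        M.obs t k x' (prof T t γ k iy iu p (γ k t iy iu)) y' *
        M.trans t x (prof T t γ k iy iu p (γ k t iy iu)) x')]
  congr 1
  have hm := markov_full (n := n) hT M hM hA ht
    (fun ω z => if InfoEq T γ k t iy iu ω then
      V (t + 1) (newObs T t k iy (win T γ k t ω) (z.2 k))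
        (newAct T t γ k iy iu (win T γ k t ω) (γ k t iy iu)) else 0)
    (fun ω ω' h => by
      funext z
      simp only [win_agUp hT hA h, infoEq_agUp hT hA h])
  trans ∑ ω : Traj n X Y, prob n M γ ω * ∑ z, stepK M t (stateAt ω t) (actAt γ ω t) z *
    (if InfoEq T γ k t iy iu ω then
      V (t + 1) (newObs T t k iy (win T γ k t ω) (z.2 k))
        (newAct T t γ k iy iu (win T γ k t ω) (γ k t iy iu)) else 0)
  · apply Finset.sum_congr rfl
    intro ω _
    by_cases h : InfoEq T γ k t iy iu ω
    · simp only [if_pos h]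
      rw [prof_own hT hA ht.le h]
      rw [stepK_sum_own M hM t (stateAt ω t) (actAt γ ω t) k (fun y' =>
        V (t + 1) (newObs T t k iy (win T γ k t ω) y')
        (newAct T t γ k iy iu (win T γ k t ω) (γ k t iy iu)))]
    · simp [h]
  · rw [← hm]
    apply Finset.sum_congr rfl
    intro ω _
    by_cases h : InfoEq T γ k t iy iu ω
    · simp only [if_pos h]
      rw [hV _ _ _ _ (new_IS hT hA ht h)]
    · simp [h]

theorem tower {Ω : Type} [Fintype Ω] (w f : Ω → ℝ) (R : Ω → Ω → Prop)
    (hrefl : ∀ a, R a a) (hsymm : ∀ a b, R a b → R b a) (htrans : ∀ a b c, R a b → R b c → R a c)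
    (hw : ∀ a, 0 ≤ w a) :
    ∑ a, w a * ((∑ b, if R a b then w b * f b else 0) / (∑ b, if R a b then w b else 0)) =
      ∑ a, w a * f a := by
  have h1 : ∀ a b, R a b → (∑ c, if R a c then w c else 0) = ∑ c, if R b c then w c else 0 := by
    intro a b h
    apply Finset.sum_congr rfl
    intro c _
    have : R a c ↔ R b c := ⟨htrans _ _ _ (hsymm _ _ h), htrans _ _ _ h⟩
    simp only [this]
  have h2 : ∀ a, w a * ((∑ b, if R a b then w b * f b else 0) / (∑ b, if R a b then w b else 0))
      = ∑ b, (if R b a then w a else 0) * (w b * f b / (∑ c, if R b c then w c else 0)) := by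
    intro a
    rw [Finset.sum_div, Finset.mul_sum]
    apply Finset.sum_congr rfl
    intro b _
    by_cases h : R a b
    · rw [if_pos h, if_pos (hsymm _ _ h), h1 a b h]
    · rw [if_neg h, if_neg (fun h' => h (hsymm _ _ h'))]; simp
  rw [Finset.sum_congr rfl (fun a _ => h2 a), Finset.sum_comm]
  apply Finset.sum_congr rfl
  intro b _
  rw [← Finset.sum_mul]
  by_cases h : (∑ c, if R b c then w c else 0) = 0
  · rw [h]
    have : w b = 0 := by
      rw [Finset.sum_eq_zero_iff_of_nonneg] at h
      · have := h b (Finset.mem_univ _)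
        rwa [if_pos (hrefl b)] at this
      · intro c _; split_ifs
        · exact hw c
        · exact le_rfl
    simp [this]
  · field_simp

theorem tower_info {n T : ℕ} (M : Kernels X Y U) (hM : M.IsPMF) (γ : Strat Y U) (k : Fin K)
    (t : ℕ) (f : Traj n X Y → ℝ) :
    ∑ ω : Traj n X Y, prob n M γ ω *
      ((∑ ω' : Traj n X Y, if InfoEq T γ k t (obsP ω) (actAt γ ω) ω' then
        prob n M γ ω' * f ω' else 0) / Pr n M γ (InfoEq T γ k t (obsP ω) (actAt γ ω))) =
    ∑ ω : Traj n X Y, prob n M γ ω * f ω := by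
  unfold Pr
  exact tower (prob n M γ) f (fun ω ω' => InfoEq T γ k t (obsP ω) (actAt γ ω) ω')
    (fun a => IS.refl _ _ _ _ _) (fun a b h => IS.symm h) (fun a b c h h' => IS.trans h' h)
    (prob_nonneg M hM γ)

theorem pos_of_prob {n T : ℕ} (M : Kernels X Y U) (hM : M.IsPMF) (γ : Strat Y U) (k : Fin K)
    (t : ℕ) (ω : Traj n X Y) (h : prob n M γ ω ≠ 0) :
    PosInfo n T M γ k t (obsP ω) (actAt γ ω) := by
  unfold PosInfo Pr
  have h0 : ∀ ω' ∈ (Finset.univ : Finset (Traj n X Y)),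
      0 ≤ if InfoEq T γ k t (obsP ω) (actAt γ ω) ω' then prob n M γ ω' else 0 := by
    intro ω' _; split_ifs
    · exact prob_nonneg M hM γ ω'
    · exact le_rfl
  apply Finset.sum_pos' h0
  refine ⟨ω, Finset.mem_univ _, ?_⟩
  rw [if_pos (show InfoEq T γ k t (obsP ω) (actAt γ ω) ω from IS.refl _ _ _ _ _)]
  exact lt_of_le_of_ne (prob_nonneg M hM γ ω) (Ne.symm h)

end windows

section opt

theorem infoEq_strat {n T : ℕ} (hT : 1 ≤ T) {γ γ' : Strat Y U} (hA : Admissible T γ)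
    (hA' : Admissible T γ') {k : Fin K} {t : ℕ} (h : ∀ s, s < t → ∀ j, γ j s = γ' j s)
    (iy : ℕ → ∀ j, Y j) (iu : ℕ → ∀ j, U j) :
    (InfoEq T γ k t iy iu : Traj n X Y → Prop) = InfoEq T γ' k t iy iu := by
  funext ω
  have ha : ∀ s, s < t → actAt γ ω s = actAt γ' ω s := act_strat hT hA hA' _ t h
  have : IS T k t (obsP ω) (actAt γ ω) (obsP ω) (actAt γ' ω) :=
    ⟨fun _ _ _ => rfl, fun s j hs => by rw [ha s (by omega)], fun _ _ => rfl,
      fun s hs => by rw [ha s hs]⟩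
  apply propext
  rw [infoEq_iff, infoEq_iff]
  exact ⟨fun h' => this.symm.trans h', fun h' => this.trans h'⟩

theorem Pr_strat [Nonempty X] {n T : ℕ} (hT : 1 ≤ T) (M : Kernels X Y U) (hM : M.IsPMF)
    {γ γ' : Strat Y U} (hA : Admissible T γ) (hA' : Admissible T γ') {k : Fin K} {t : ℕ}
    (ht : t ≤ n) (h : ∀ s, s < t → ∀ j, γ j s = γ' j s)
    (iy : ℕ → ∀ j, Y j) (iu : ℕ → ∀ j, U j) :
    Pr n M γ (InfoEq T γ k t iy iu) = Pr n M γ' (InfoEq T γ k t iy iu) := by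
  have := expect_strat (n := n) hT M hM hA hA' ht h
    (fun ω => if InfoEq T γ k t iy iu ω then 1 else 0)
    (fun ω ω' ha => by simp only [infoEq_agUp hT hA ha])
  unfold Pr
  simpa only [mul_ite, mul_one, mul_zero] using this

theorem sum_split (n t : ℕ) (ht : t ≤ n) (c : ℕ → ℝ) :
    ∑ τ ∈ Finset.range (n + 1), c τ = ∑ τ ∈ Finset.range t, c τ + ∑ τ ∈ Finset.Icc t n, c τ := by
  have : Finset.Icc t n = Finset.Ico t (n + 1) := by
    ext a; simp only [Finset.mem_Icc, Finset.mem_Ico]; omega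
  rw [this, Finset.range_eq_Ico, Finset.range_eq_Ico,
    Finset.sum_Ico_consecutive _ (Nat.zero_le t) (by omega)]

/-- Splitting the total cost at time `t` and along an event. -/
theorem J_split {n : ℕ} (M : Kernels X Y U) (γ : Strat Y U) (t : ℕ) (ht : t ≤ n)
    (B : Traj n X Y → Prop) :
    J n M γ =
      (∑ ω : Traj n X Y, prob n M γ ω *
        ∑ τ ∈ Finset.range t, M.cost τ (stateAt ω τ) (actAt γ ω τ)) +
      (∑ ω : Traj n X Y, if B ω then prob n M γ ω *
        ∑ τ ∈ Finset.Icc t n, M.cost τ (stateAt ω τ) (actAt γ ω τ) else 0) +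
      (∑ ω : Traj n X Y, if B ω then 0 else prob n M γ ω *
        ∑ τ ∈ Finset.Icc t n, M.cost τ (stateAt ω τ) (actAt γ ω τ)) := by
  unfold J
  rw [← Finset.sum_add_distrib, ← Finset.sum_add_distrib]
  apply Finset.sum_congr rfl
  intro ω _
  rw [sum_split n t ht]
  split_ifs <;> ring

theorem prob_of_act {n : ℕ} (M : Kernels X Y U) (γ γ' : Strat Y U) (ω : Traj n X Y)
    (h : ∀ s, s < n → actAt γ ω s = actAt γ' ω s) : prob n M γ ω = prob n M γ' ω := by
  unfold prob
  congr 1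
  apply Finset.prod_congr rfl
  intro t ht
  rw [h t (Finset.mem_range.1 ht)]

theorem Jcond_le [Nonempty X] {n T : ℕ} (hT : 1 ≤ T) (M : Kernels X Y U) (hM : M.IsPMF)
    {γ : Strat Y U} (hA : Admissible T γ) (k : Fin K)
    (hopt : ∀ h : SStrat Y U k, Admissible T (updStrat γ k h) →
      J n M γ ≤ J n M (updStrat γ k h))
    {t : ℕ} (ht : t ≤ n) (iy : ℕ → ∀ j, Y j) (iu : ℕ → ∀ j, U j)
    (hpos : PosInfo n T M γ k t iy iu)
    (g : SStrat Y U k) (hA' : Admissible T (updStrat γ k (splice (γ k) g t))) :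
    Jcond n M γ t (InfoEq T γ k t iy iu) ≤
      Jcond n M (updStrat γ k (splice (γ k) g t)) t
        (InfoEq T (updStrat γ k (splice (γ k) g t)) k t iy iu) := by
  set γ' := updStrat γ k (splice (γ k) g t) with hγ'
  have hag : ∀ s, s < t → ∀ j, γ j s = γ' j s := by
    intro s hs j
    by_cases hj : j = k
    · subst hj; rw [hγ', updStrat_same]; simp [splice, hs]
    · rw [hγ', updStrat_ne _ _ _ hj]
  have hne : ∀ j, j ≠ k → γ' j = γ j := fun j hj => by rw [hγ', updStrat_ne _ _ _ hj]
  clear_value γ'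
  let G : SStrat Y U k := fun τ y u =>
    if τ < t then γ k τ y u else if IS T k t y u iy iu then γ' k τ y u else γ k τ y u
  have hG : Admissible T (updStrat γ k G) := by
    apply adm_upd hA
    intro τ y y' u u' hs
    have e1 := (adm_iff T γ).1 hA k τ y y' u u' hs
    have e2 := (adm_iff T γ').1 hA' k τ y y' u u' hs
    simp only [G]
    split_ifs with h1 h2 h3 h3
    · exact e1
    · exact e2
    · exact absurd ((hs.mono (by omega)).symm.trans h2) h3
    · exact absurd ((hs.mono (by omega)).trans h3) h2
    · exact e1
  have hJ := hopt G hG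
  have hag2 : ∀ s, s < t → ∀ j, γ j s = updStrat γ k G j s := by
    intro s hs j
    by_cases hj : j = k
    · subst hj; rw [updStrat_same]; funext y u; simp [G, hs]
    · rw [updStrat_ne _ _ _ hj]
  have hB : (InfoEq T γ k t iy iu : Traj n X Y → Prop) = InfoEq T γ' k t iy iu :=
    infoEq_strat hT hA hA' hag iy iu
  -- actions of the modified strategy on and off the event
  have hon : ∀ ω : Traj n X Y, InfoEq T γ k t iy iu ω → ∀ s,
      actAt (updStrat γ k G) ω s = actAt γ' ω s := by
    intro ω hω s
    rw [hB] at hω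
    refine act_unique hT hG _ (actAt γ' ω) (s + 1) ?_ s (by omega)
    intro r _ j
    rw [show actAt γ' ω r j = γ' j r (obsP ω) (actAt γ' ω) from act_self hT hA' _ _ _]
    by_cases hj : j = k
    · subst hj
      rw [updStrat_same]
      simp only [G]
      split_ifs with h1 h2
      · rw [hag r h1]; rfl
      · rfl
      · exact absurd hω h2
    · rw [updStrat_ne _ _ _ hj, hne j hj]; rfl
  have hoff : ∀ ω : Traj n X Y, ¬ InfoEq T γ k t iy iu ω → ∀ s,
      actAt (updStrat γ k G) ω s = actAt γ ω s := by
    intro ω hω s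
    refine act_unique hT hG _ (actAt γ ω) (s + 1) ?_ s (by omega)
    intro r _ j
    rw [show actAt γ ω r j = γ j r (obsP ω) (actAt γ ω) from act_self hT hA _ _ _]
    by_cases hj : j = k
    · subst hj
      rw [updStrat_same]
      simp only [G]
      split_ifs with h1 h2
      · rfl
      · exact absurd h2 hω
      · rfl
    · rw [updStrat_ne _ _ _ hj]; rfl
  rw [J_split M γ t ht (InfoEq T γ k t iy iu),
    J_split M (updStrat γ k G) t ht (InfoEq T γ k t iy iu)] at hJ
  have t1 : (∑ ω : Traj n X Y, prob n M γ ω *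
        ∑ τ ∈ Finset.range t, M.cost τ (stateAt ω τ) (actAt γ ω τ)) =
      ∑ ω : Traj n X Y, prob n M (updStrat γ k G) ω *
        ∑ τ ∈ Finset.range t, M.cost τ (stateAt ω τ) (actAt (updStrat γ k G) ω τ) := by
    rw [expect_strat (n := n) hT M hM hA hG ht hag2 (fun ω =>
      ∑ τ ∈ Finset.range t, M.cost τ (stateAt ω τ) (actAt γ ω τ))]
    · apply Finset.sum_congr rfl
      intro ω _
      congr 1
      apply Finset.sum_congr rfl
      intro τ hτ
      rw [show actAt γ ω τ = actAt (updStrat γ k G) ω τ from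
        act_strat hT hA hG _ t hag2 τ (Finset.mem_range.1 hτ)]
    · intro ω ω' h
      apply Finset.sum_congr rfl
      intro τ hτ
      have hτ' := Finset.mem_range.1 hτ
      rw [actAt_congr hT hA h hτ'.le,
        show stateAt ω τ = stateAt ω' τ from (h τ hτ'.le).1]
  have t3 : (∑ ω : Traj n X Y, if InfoEq T γ k t iy iu ω then 0 else prob n M γ ω *
        ∑ τ ∈ Finset.Icc t n, M.cost τ (stateAt ω τ) (actAt γ ω τ)) =
      ∑ ω : Traj n X Y, if InfoEq T γ k t iy iu ω then 0 else prob n M (updStrat γ k G) ω *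
        ∑ τ ∈ Finset.Icc t n, M.cost τ (stateAt ω τ) (actAt (updStrat γ k G) ω τ) := by
    apply Finset.sum_congr rfl
    intro ω _
    by_cases h : InfoEq T γ k t iy iu ω
    · simp [h]
    · simp only [if_neg h, hoff ω h]
      rw [prob_of_act M γ (updStrat γ k G) ω (fun s _ => (hoff ω h s).symm)]
  have t2 : (∑ ω : Traj n X Y, if InfoEq T γ k t iy iu ω then prob n M (updStrat γ k G) ω *
        ∑ τ ∈ Finset.Icc t n, M.cost τ (stateAt ω τ) (actAt (updStrat γ k G) ω τ) else 0) =
      ∑ ω : Traj n X Y, if InfoEq T γ k t iy iu ω then prob n M γ' ω *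
        ∑ τ ∈ Finset.Icc t n, M.cost τ (stateAt ω τ) (actAt γ' ω τ) else 0 := by
    apply Finset.sum_congr rfl
    intro ω _
    by_cases h : InfoEq T γ k t iy iu ω
    · simp only [if_pos h, hon ω h]
      rw [prob_of_act M (updStrat γ k G) γ' ω (fun s _ => (hon ω h s))]
    · simp [h]
  rw [t1, t3, t2] at hJ
  have hP := Pr_strat (n := n) hT M hM hA hA' (k := k) ht hag iy iu
  unfold Jcond
  rw [← hB, ← hP]
  exact div_le_div_of_nonneg_right (by linarith) (le_of_lt hpos)

theorem Vval_eq [Nonempty X] {n T : ℕ} (hT : 1 ≤ T) (M : Kernels X Y U) (hM : M.IsPMF)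
    {γ : Strat Y U} (hA : Admissible T γ) (k : Fin K)
    (hopt : ∀ h : SStrat Y U k, Admissible T (updStrat γ k h) →
      J n M γ ≤ J n M (updStrat γ k h))
    {t : ℕ} (ht : t ≤ n) (iy : ℕ → ∀ j, Y j) (iu : ℕ → ∀ j, U j)
    (hpos : PosInfo n T M γ k t iy iu) :
    Vval n T M γ k t iy iu = Jcond n M γ t (InfoEq T γ k t iy iu) := by
  have hs : updStrat γ k (splice (γ k) (γ k) t) = γ := by
    have : splice (γ k) (γ k) t = γ k := by funext τ; simp [splice]
    rw [this, updStrat_self]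
  apply IsLeast.csInf_eq
  constructor
  · refine ⟨γ k, ?_, ?_⟩
    · rw [hs]; exact hA
    · rw [hs]
  · rintro r ⟨g, hg, rfl⟩
    exact Jcond_le hT M hM hA k hopt ht iy iu hpos g hg

theorem Vval_congr {n T : ℕ} (M : Kernels X Y U) (γ : Strat Y U) (k : Fin K) (t : ℕ)
    {y y' : ℕ → ∀ j, Y j} {u u' : ℕ → ∀ j, U j} (h : IS T k t y u y' u') :
    Vval n T M γ k t y u = Vval n T M γ k t y' u' := by
  unfold Vval
  simp only [infoEq_congr _ h]

theorem attains [Nonempty X] {n T : ℕ} (hT : 1 ≤ T) (M : Kernels X Y U) (hM : M.IsPMF)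
    {γ : Strat Y U} (hA : Admissible T γ) (k : Fin K)
    (hopt : ∀ h : SStrat Y U k, Admissible T (updStrat γ k h) →
      J n M γ ≤ J n M (updStrat γ k h)) :
    AttainsDP n T M γ k (Vval n T M γ k) := by
  have hstage : ∀ t, t ≤ n → ∀ iy iu, dpStage n T M γ k t iy iu (γ k t iy iu) =
      (∑ ω : Traj n X Y, if InfoEq T γ k t iy iu ω then
      prob n M γ ω * M.cost t (stateAt ω t) (actAt γ ω t) else 0) /
      Pr n M γ (InfoEq T γ k t iy iu) := by
    intro t ht iy iu
    rw [dpStage_eq hT M hA k ht]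
    congr 1
    apply Finset.sum_congr rfl
    intro ω _
    split_ifs with h
    · rw [← own_act hT hA h, Function.update_eq_self]
    · rfl
  constructor
  · intro iy iu hpos
    rw [Vval_eq hT M hM hA k hopt le_rfl iy iu hpos, hstage n le_rfl]
    unfold Jcond
    simp
  · intro t iy iu ht hpos
    rw [Vval_eq hT M hM hA k hopt ht.le iy iu hpos, hstage t ht.le,
      dpCont_eq hT M hM hA k ht iy iu _ (fun y u y' u' h => Vval_congr M γ k (t + 1) h),
      ← add_div]
    unfold Jcond
    congr 1
    have htow := tower_info (n := n) (T := T) M hM γ k (t + 1) (fun ω =>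
      if InfoEq T γ k t iy iu ω then
        ∑ τ ∈ Finset.Icc (t + 1) n, M.cost τ (stateAt ω τ) (actAt γ ω τ) else 0)
    have e : (∑ ω : Traj n X Y, if InfoEq T γ k t iy iu ω then
        prob n M γ ω * Vval n T M γ k (t + 1) (obsP ω) (actAt γ ω) else 0) =
        ∑ ω : Traj n X Y, prob n M γ ω * if InfoEq T γ k t iy iu ω then
        ∑ τ ∈ Finset.Icc (t + 1) n, M.cost τ (stateAt ω τ) (actAt γ ω τ) else 0 := by
      rw [← htow]
      apply Finset.sum_congr rfl
      intro ω _
      by_cases hp : prob n M γ ω = 0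
      · simp [hp]
      have hin : ∀ ω' : Traj n X Y, InfoEq T γ k (t + 1) (obsP ω) (actAt γ ω) ω' →
          (InfoEq T γ k t iy iu ω' ↔ InfoEq T γ k t iy iu ω) := by
        intro ω' h'
        have h'' : IS T k t (obsP ω') (actAt γ ω') (obsP ω) (actAt γ ω) :=
          IS.mono (Nat.le_succ t) h'
        rw [infoEq_iff, infoEq_iff]
        exact ⟨fun q => h''.symm.trans q, fun q => h''.trans q⟩
      by_cases h : InfoEq T γ k t iy iu ω
      · rw [if_pos h, Vval_eq hT M hM hA k hopt ht _ _
          (pos_of_prob M hM γ k (t + 1) ω hp)]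
        congr 1
        unfold Jcond
        congr 1
        apply Finset.sum_congr rfl
        intro ω' _
        by_cases h' : InfoEq T γ k (t + 1) (obsP ω) (actAt γ ω) ω'
        · rw [if_pos h', if_pos h', if_pos ((hin ω' h').2 h)]
        · rw [if_neg h', if_neg h']
      · rw [if_neg h]
        symm
        apply mul_eq_zero_of_right
        rw [Finset.sum_eq_zero, zero_div]
        intro ω' _
        by_cases h' : InfoEq T γ k (t + 1) (obsP ω) (actAt γ ω) ω'
        · rw [if_pos h', if_neg (fun q => h ((hin ω' h').1 q)), mul_zero]
        · rw [if_neg h']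
    rw [e, ← Finset.sum_add_distrib]
    apply Finset.sum_congr rfl
    intro ω _
    have hI : ∀ c : ℕ → ℝ, ∑ τ ∈ Finset.Icc t n, c τ =
        c t + ∑ τ ∈ Finset.Icc (t + 1) n, c τ := by
      intro c
      rw [← Finset.insert_Icc_add_one_left_eq_Icc ht.le, Finset.sum_insert (by simp)]
    split_ifs with h
    · rw [hI]; ring
    · ring

/-- A minimizer of a real function on the (finite) action space. -/
noncomputable def amin {k : Fin K} (f : U k → ℝ) : U k := Classical.choose (Finite.exists_min f)

theorem amin_le {k : Fin K} (f : U k → ℝ) (u : U k) : f (amin f) ≤ f u :=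
  Classical.choose_spec (Finite.exists_min f) u

theorem Xi_congr {n T : ℕ} (M : Kernels X Y U) (γ : Strat Y U) (k : Fin K) (t : ℕ)
    {y y' : ℕ → ∀ j, Y j} {u u' : ℕ → ∀ j, U j} (h : IS T k t y u y' u') :
    Xi n T M γ k t y u = Xi n T M γ k t y' u' := by
  funext x ly lu
  unfold Xi
  rw [infoEq_congr _ h]

theorem Xi_strat {n T : ℕ} (hT : 1 ≤ T) (M : Kernels X Y U) {γ γ' : Strat Y U}
    (hA : Admissible T γ) (hA' : Admissible T γ') (k : Fin K)
    (h : ∀ s, s < n → ∀ j, γ j s = γ' j s) :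
    Xi n T M γ k n = Xi n T M γ' k n := by
  funext y u x ly lu
  have ha : ∀ ω : Traj n X Y, ∀ s, s < n → actAt γ ω s = actAt γ' ω s :=
    fun ω => act_strat hT hA hA' _ n h
  have hp : ∀ ω : Traj n X Y, prob n M γ ω = prob n M γ' ω :=
    fun ω => prob_of_act M γ γ' ω (ha ω)
  have hq : ∀ ω : Traj n X Y, PrivOthersEq T γ k n ly lu ω ↔ PrivOthersEq T γ' k n ly lu ω := by
    intro ω
    unfold PrivOthersEq
    refine and_congr Iff.rfl ?_
    constructor
    · intro h1 s j hj hs hs'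
      rw [← ha ω s hs]; exact h1 s j hj hs hs'
    · intro h1 s j hj hs hs'
      rw [ha ω s hs]; exact h1 s j hj hs hs'
  have hq' : (PrivOthersEq T γ k n ly lu : Traj n X Y → Prop) = PrivOthersEq T γ' k n ly lu :=
    funext fun ω => propext (hq ω)
  have hp' : (prob n M γ : Traj n X Y → ℝ) = prob n M γ' := funext hp
  unfold Xi condPr Pr
  rw [infoEq_strat hT hA hA' h, hq', hp']

theorem dpStage_congr {n T : ℕ} (M : Kernels X Y U) {γ : Strat Y U}
    (hA : Admissible T γ) (k : Fin K) (t : ℕ)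
    {y y' : ℕ → ∀ j, Y j} {u u' : ℕ → ∀ j, U j}
    (hX : ∀ x ly lu, Xi n T M γ k t y u x ly lu = Xi n T M γ k t y' u' x ly lu)
    (h1 : ∀ s (j : Fin K), s + T ≤ t → y s j = y' s j)
    (h2 : ∀ s (j : Fin K), s + T ≤ t → u s j = u' s j) :
    dpStage n T M γ k t y u = dpStage n T M γ k t y' u' := by
  funext v
  unfold dpStage
  apply Finset.sum_congr rfl
  intro x _
  apply Finset.sum_congr rfl
  intro p _
  rw [hX]
  congr 2
  unfold prof
  funext j
  by_cases hj : j = k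
  · subst hj; simp
  · rw [Function.update_of_ne hj, Function.update_of_ne hj]
    apply hA
    · intro s i hs
      simp only [mixObs, hs, or_true, if_true]; exact h1 s i hs
    · intro s i hs
      simp only [mixAct, hs, or_true, if_true]; exact h2 s i hs
    · intro s hs
      simp only [mixObs, hj, false_or]
      split_ifs with hc
      · exact h1 s j hc
      · rfl
    · intro s hs
      simp only [mixAct, hj, false_or]
      split_ifs with hc
      · exact h2 s j hc
      · rfl

theorem expect_stage {n T : ℕ} (hT : 1 ≤ T) (M : Kernels X Y U) (hM : M.IsPMF)
    {γ : Strat Y U} (hA : Admissible T γ) (k : Fin K)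
    (c : (ℕ → ∀ j, Y j) → (ℕ → ∀ j, U j) → U k)
    (hc : ∀ y u y' u', IS T k n y u y' u' → c y u = c y' u') :
    ∑ ω : Traj n X Y, prob n M γ ω * M.cost n (stateAt ω n)
      (Function.update (actAt γ ω n) k (c (obsP ω) (actAt γ ω))) =
    ∑ ω : Traj n X Y, prob n M γ ω *
      dpStage n T M γ k n (obsP ω) (actAt γ ω) (c (obsP ω) (actAt γ ω)) := by
  rw [← tower_info (n := n) (T := T) M hM γ k n]
  apply Finset.sum_congr rfl
  intro ω _
  rw [dpStage_eq hT M hA k le_rfl]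
  congr 2
  apply Finset.sum_congr rfl
  intro ω' _
  split_ifs with h
  · rw [hc (obsP ω') (actAt γ ω') (obsP ω) (actAt γ ω) h]
  · rfl

end opt

/-!  STATEMENT 11 (Theorem 3 (1.2): the minimization in the dynamic programming equations
is achieved within the class of semi-separated strategies; `(Ξ_t^k[I_t^k], Δ_t^{(K)},
Λ_t^k)` is a sufficient statistic, and at the terminal time `(Ξ_n^k[i_n^k], δ_n^{(K)})`
suffices). -/

/-- Suppose a PbP optimal profile `γ^{(K),o}` exists.  Then for each station `k` there is
a strategy `g` of station `k` which is semi-separated — at the terminal time its action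
depends on `i_n^k` only through `(Ξ_n^k[i_n^k], δ_n^{(K)})`, and for `t < n` only through
`(Ξ_t^k[i_t^k], δ_t^{(K)}, λ_t^k)` — attains the minimum in the dynamic programming
equations at every realization of positive probability, and is optimal for station `k`
against `γ^{-k,o}`. -/
theorem DP_minimum_in_semi_separated_class
    {X : Type} [Fintype X] [DecidableEq X] [Nonempty X]
    {K : ℕ} {Y U : Fin K → Type}
    [∀ k, Fintype (Y k)] [∀ k, DecidableEq (Y k)] [∀ k, Nonempty (Y k)]
    [∀ k, Fintype (U k)] [∀ k, DecidableEq (U k)] [∀ k, Nonempty (U k)]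
    (n T : ℕ) (hT : 1 ≤ T) (hTn : T ≤ n)
    (M : Kernels X Y U) (hM : M.IsPMF)
    (γo : Strat Y U) (hopt : PbPOptimal n T M γo) (k : Fin K) :
    ∃ g : SStrat Y U k,
      Admissible T (updStrat γo k g) ∧
      -- terminal time: `u_n^{k,o} = γ_n^{k,o}(ξ_n^k[i_n^k], δ_n^{(K)})`
      (∀ (y y' : ℕ → ∀ j, Y j) (u u' : ℕ → ∀ j, U j),
        (∀ x ly lu, Xi n T M (updStrat γo k g) k n y u x ly lu =
          Xi n T M (updStrat γo k g) k n y' u' x ly lu) →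
        (∀ s (j : Fin K), s + T ≤ n → y s j = y' s j) →
        (∀ s (j : Fin K), s + T ≤ n → u s j = u' s j) →
        g n y u = g n y' u') ∧
      -- `t < n`: `u_t^{k,o} = γ_t^{k,o}(ξ_t^k[i_t^k], δ_t^{(K)}, λ_t^k)`
      (∀ t, t < n →
        ∀ (y y' : ℕ → ∀ j, Y j) (u u' : ℕ → ∀ j, U j),
          (∀ x ly lu, Xi n T M (updStrat γo k g) k t y u x ly lu =
            Xi n T M (updStrat γo k g) k t y' u' x ly lu) →
          (∀ s (j : Fin K), s + T ≤ t → y s j = y' s j) →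
          (∀ s (j : Fin K), s + T ≤ t → u s j = u' s j) →
          (∀ s, s ≤ t → t < s + T → y s k = y' s k) →
          (∀ s, s < t → t < s + T → u s k = u' s k) →
          g t y u = g t y' u') ∧
      -- `g` attains the minimum in the dynamic programming equations
      AttainsDP n T M (updStrat γo k g) k (Vval n T M (updStrat γo k g) k) ∧
      -- and is optimal for station `k` against the fixed optimal responses `γ^{-k,o}`
      (∀ h : SStrat Y U k, Admissible T (updStrat γo k h) →
        J n M (updStrat γo k g) ≤ J n M (updStrat γo k h)) ∧
      J n M (updStrat γo k g) = J n M γo := by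
  obtain ⟨hA, hJo⟩ := hopt
  let gn : SStrat Y U k := fun _ y u => amin (dpStage n T M γo k n y u)
  let g : SStrat Y U k := splice (γo k) gn n
  have hc : ∀ y u y' u', IS T k n y u y' u' →
      amin (dpStage n T M γo k n y u) = amin (dpStage n T M γo k n y' u') := by
    intro y u y' u' h
    rw [dpStage_congr M hA k n (fun x ly lu => by rw [Xi_congr M γo k n h]) h.1 h.2.1]
  have hgA : Admissible T (updStrat γo k g) := by
    apply adm_upd hA
    intro t y y' u u' h
    simp only [g, splice]
    split_ifs with ht
    · exact (adm_iff T γo).1 hA _ _ _ _ _ _ h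
    · exact hc _ _ _ _ (h.mono (by omega))
  have hag : ∀ s, s < n → ∀ j, updStrat γo k g j s = γo j s := by
    intro s hs j
    by_cases hj : j = k
    · subst hj; rw [updStrat_same]; simp [g, splice, hs]
    · rw [updStrat_ne _ _ _ hj]
  have hXi : Xi n T M (updStrat γo k g) k n = Xi n T M γo k n := Xi_strat hT M hgA hA k hag
  have hle : J n M (updStrat γo k g) ≤ J n M γo := by
    have ha : ∀ ω : Traj n X Y, ∀ s, s < n → actAt (updStrat γo k g) ω s = actAt γo ω s :=
      fun ω => act_strat hT hgA hA _ n hag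
    have hp : ∀ ω : Traj n X Y, prob n M (updStrat γo k g) ω = prob n M γo ω :=
      fun ω => prob_of_act M _ _ ω (ha ω)
    have hlast : ∀ ω : Traj n X Y, actAt (updStrat γo k g) ω n =
        Function.update (actAt γo ω n) k (amin (dpStage n T M γo k n (obsP ω) (actAt γo ω))) := by
      intro ω
      funext j
      have hIS : IS T j n (obsP ω) (actAt (updStrat γo k g) ω) (obsP ω) (actAt γo ω) :=
        ⟨fun _ _ _ => rfl, fun s i hs => by rw [ha ω s (by omega)], fun _ _ => rfl,
          fun s hs => by rw [ha ω s hs]⟩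
      rw [show actAt (updStrat γo k g) ω n j = updStrat γo k g j n (obsP ω) (actAt γo ω) from
        act_spec hT hgA _ _ _ _ _ hIS]
      by_cases hj : j = k
      · subst hj
        rw [updStrat_same]
        simp [g, splice, gn]
      · rw [updStrat_ne _ _ _ hj, Function.update_of_ne hj]
        exact (act_self hT hA _ _ _).symm
    unfold J
    simp only [Finset.sum_range_succ, mul_add, Finset.sum_add_distrib, hp, hlast]
    have e1 := expect_stage (n := n) hT M hM hA k
      (fun y u => amin (dpStage n T M γo k n y u)) hc
    have e2 := expect_stage (n := n) hT M hM hA k (fun y u => γo k n y u)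
      (fun y u y' u' h => (adm_iff T γo).1 hA _ _ _ _ _ _ h)
    have e3 : ∑ ω : Traj n X Y, prob n M γo ω * M.cost n (stateAt ω n) (actAt γo ω n) =
        ∑ ω : Traj n X Y, prob n M γo ω * M.cost n (stateAt ω n)
          (Function.update (actAt γo ω n) k (γo k n (obsP ω) (actAt γo ω))) := by
      apply Finset.sum_congr rfl
      intro ω _
      rw [← show actAt γo ω n k = γo k n (obsP ω) (actAt γo ω) from act_self hT hA _ _ _,
        Function.update_eq_self]
    rw [e1, e3, e2]
    refine add_le_add (le_of_eq ?_) ?_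
    · apply Finset.sum_congr rfl
      intro ω _
      congr 1
      apply Finset.sum_congr rfl
      intro s hs
      rw [ha ω s (Finset.mem_range.1 hs)]
    · apply Finset.sum_le_sum
      intro ω _
      exact mul_le_mul_of_nonneg_left (amin_le _ _) (prob_nonneg M hM γo ω)
  have hoptg : ∀ h : SStrat Y U k, Admissible T (updStrat γo k h) →
      J n M (updStrat γo k g) ≤ J n M (updStrat γo k h) :=
    fun h hh => hle.trans (hJo k h hh)
  refine ⟨g, hgA, ?_, ?_, ?_, hoptg, le_antisymm hle (hJo k g hgA)⟩
  · intro y y' u u' hX h1 h2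
    rw [hXi] at hX
    simp only [g, splice, lt_irrefl, if_false, gn]
    rw [dpStage_congr M hA k n hX h1 h2]
  · intro t _ y y' u u' _ h1 h2 h3 h4
    have := hgA k t y y' u u' h1 h2
      (fun s hs => by
        by_cases hc : s + T ≤ t
        · exact h1 s k hc
        · exact h3 s hs (by omega))
      (fun s hs => by
        by_cases hc : s + T ≤ t
        · exact h2 s k hc
        · exact h4 s hs (by omega))
    rwa [updStrat_same] at this
  · apply attains hT M hM hgA k
    intro h hh
    rw [updStrat_upd] at hh ⊢
    exact hoptg h hh

end DelayedSharing
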